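/- arXiv:2004.07593 — 5 statements merged into one kernel-verified Lean document; each statement's English description precedes it below -/
import Mathlib

section
/- (Semigroup property of the stable Fourier-multiplier family.) Let α ∈ (0,1), m₁, m₂ ∈ [0,∞) with m₁ + m₂ > 0, β ∈ ℝ, and let f be a complex-valued Schwartz function on ℝ. Then: (a) P_0 f = f; (b) for every s ≥ 0, P_s f is Lebesgue integrable on ℝ and its Fourier transform satisfies (P_s f)^(ξ) = e^{s} f̂(e^{s}ξ) ψ_α(e^{s}ξ)/ψ_α(ξ) for all ξ ∈ ℝ; (c) for all s, t ≥ 0 and x ∈ ℝ, (1/2π) ∫_ℝ (P_s f)^(ξ) e^{iξx e^{-t}} ψ_α(ξ)/ψ_α(e^{-t}ξ) dξ = P_{t+s} f(x), i.e. P_t(P_s f) = P_{t+s} f. -/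
open MeasureTheory

/-- The α-stable Lévy measure on ℝ with density
`u ↦ m₁ u^(-α-1) 1_{(0,∞)}(u) + m₂ |u|^(-α-1) 1_{(-∞,0)}(u)` w.r.t. Lebesgue measure. -/
noncomputable def nuStable (α m₁ m₂ : ℝ) : Measure ℝ :=
  (volume : Measure ℝ).withDensity fun u =>
    ENNReal.ofReal (if 0 < u then m₁ * u ^ (-α - 1) else if u < 0 then m₂ * |u| ^ (-α - 1) else 0)

/-- Location parameter `Γ_α = β - (m₁ - m₂) ∫₀^∞ u^{-α}(1+u²)^{-1} du` for `α ∈ (0,1)`. -/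
noncomputable def Gamma01 (α m₁ m₂ β : ℝ) : ℝ :=
  β - (m₁ - m₂) * ∫ u in Set.Ioi (0 : ℝ), u ^ (-α) / (1 + u ^ 2)

/-- Characteristic function of the `α`-stable law, `α ∈ (0,1)`:
`ψ_α(t) = exp(itΓ_α + ∫_ℝ (e^{itu} - 1) ν_α(du))`. -/
noncomputable def psi01 (α m₁ m₂ β : ℝ) (t : ℝ) : ℂ :=
  Complex.exp (Complex.I * t * (Gamma01 α m₁ m₂ β) +
    ∫ u : ℝ, (Complex.exp (Complex.I * t * u) - 1) ∂(nuStable α m₁ m₂))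

/-- Fourier transform `f̂(ξ) = ∫_ℝ f(x) e^{-ixξ} dx`. -/
noncomputable def fourierT (g : ℝ → ℂ) (ξ : ℝ) : ℂ :=
  ∫ x : ℝ, g x * Complex.exp (-(Complex.I * x * ξ))

/-- The stable Fourier-multiplier family
`P_t f(x) = (1/2π) ∫_ℝ f̂(ξ) e^{iξx e^{-t}} ψ_α(ξ)/ψ_α(e^{-t}ξ) dξ`. -/
noncomputable def Pt (α m₁ m₂ β : ℝ) (t : ℝ) (g : ℝ → ℂ) (x : ℝ) : ℂ :=
  ((1 / (2 * Real.pi) : ℝ) : ℂ) *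
    ∫ ξ : ℝ, fourierT g ξ * Complex.exp (Complex.I * ξ * x * ((Real.exp (-t) : ℝ) : ℂ)) *
      psi01 α m₁ m₂ β ξ / psi01 α m₁ m₂ β (Real.exp (-t) * ξ)

open Filter Topology FourierTransform

namespace StableAux

/-- The density of the Lévy measure. -/
noncomputable def dens (α m₁ m₂ : ℝ) (u : ℝ) : ℝ :=
  if 0 < u then m₁ * u ^ (-α - 1) else if u < 0 then m₂ * |u| ^ (-α - 1) else 0

lemma dens_meas (α m₁ m₂ : ℝ) : Measurable (dens α m₁ m₂) := by
  unfold dens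
  refine Measurable.ite measurableSet_Ioi (by fun_prop) ?_
  exact Measurable.ite measurableSet_Iio (by fun_prop) (by fun_prop)

lemma dens_nonneg {α m₁ m₂ : ℝ} (hm₁ : 0 ≤ m₁) (hm₂ : 0 ≤ m₂) (u : ℝ) : 0 ≤ dens α m₁ m₂ u := by
  unfold dens
  split_ifs <;> positivity

lemma dens_scale (α m₁ m₂ : ℝ) {r : ℝ} (hr : 0 < r) (u : ℝ) :
    dens α m₁ m₂ u = r ^ (α + 1) * dens α m₁ m₂ (r * u) := by
  have hrr : r ^ (α + 1) * r ^ (-α - 1) = 1 := by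
    rw [← Real.rpow_add hr]; simp
  unfold dens
  rcases lt_trichotomy u 0 with h | h | h
  · have h1 : r * u < 0 := by nlinarith
    rw [if_neg h.le.not_gt, if_pos h, if_neg h1.le.not_gt, if_pos h1, abs_mul, abs_of_pos hr,
      Real.mul_rpow hr.le (abs_nonneg u)]
    linear_combination (-m₂ * |u| ^ (-α - 1)) * hrr
  · simp [h]
  · have h1 : 0 < r * u := by positivity
    rw [if_pos h, if_pos h1, Real.mul_rpow hr.le h.le]
    linear_combination (-m₁ * u ^ (-α - 1)) * hrr

lemma nu_eq (α m₁ m₂ : ℝ) : nuStable α m₁ m₂ =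
    (volume : Measure ℝ).withDensity fun u => ENNReal.ofReal (dens α m₁ m₂ u) := rfl

lemma nu_integral {α m₁ m₂ : ℝ} (hm₁ : 0 ≤ m₁) (hm₂ : 0 ≤ m₂) (g : ℝ → ℂ) :
    ∫ u, g u ∂(nuStable α m₁ m₂) = ∫ u, dens α m₁ m₂ u • g u := by
  rw [nu_eq, integral_withDensity_eq_integral_toReal_smul
    (dens_meas α m₁ m₂).ennreal_ofReal (by simp)]
  simp [ENNReal.toReal_ofReal (dens_nonneg hm₁ hm₂ _)]

lemma nu_scale {α m₁ m₂ : ℝ} (hm₁ : 0 ≤ m₁) (hm₂ : 0 ≤ m₂) {r : ℝ} (hr : 0 < r) (g : ℝ → ℂ) :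
    ∫ u, g (r * u) ∂(nuStable α m₁ m₂) = ((r ^ α : ℝ) : ℂ) * ∫ u, g u ∂(nuStable α m₁ m₂) := by
  rw [nu_integral hm₁ hm₂, nu_integral hm₁ hm₂]
  have h1 : ∀ u, dens α m₁ m₂ u • g (r * u) =
      (r ^ (α + 1)) • (fun v => dens α m₁ m₂ v • g v) (r * u) := by
    intro u
    rw [dens_scale α m₁ m₂ hr u, mul_smul]
  rw [integral_congr_ae (ae_of_all _ h1)]
  rw [integral_smul, Measure.integral_comp_mul_left (fun v => dens α m₁ m₂ v • g v) r, smul_smul, abs_of_pos (by positivity),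
    ← Complex.real_smul]
  congr 1
  rw [Real.rpow_add hr]; field_simp; simp

lemma min_integrable {α m₁ m₂ : ℝ} (hα : 0 < α) (hα1 : α < 1) (hm₁ : 0 ≤ m₁) (hm₂ : 0 ≤ m₂) :
    Integrable (fun u : ℝ => min 1 |u|) (nuStable α m₁ m₂) := by
  rw [nu_eq, integrable_withDensity_iff_integrable_smul' (dens_meas α m₁ m₂).ennreal_ofReal
    (by simp)]
  have key : IntegrableOn (fun u : ℝ => |u| ^ (-α - 1) * min 1 |u|) (Set.Ioi 0) := by
    rw [← Set.Ioc_union_Ioi_eq_Ioi zero_le_one]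
    refine IntegrableOn.union ?_ ?_
    · have h := (intervalIntegral.intervalIntegrable_rpow' (r := -α) (by linarith)
        (a := 0) (b := 1)).1
      refine h.congr_fun ?_ measurableSet_Ioc
      intro u hu
      simp only
      rw [abs_of_pos hu.1, min_eq_right hu.2]
      conv_rhs => rw [← Real.rpow_one u, ← Real.rpow_mul hu.1.le, ← Real.rpow_add hu.1]
      congr 1; ring
    · have h := integrableOn_Ioi_rpow_of_lt (a := -α - 1) (by linarith) zero_lt_one
      refine h.congr_fun ?_ measurableSet_Ioi
      intro u hu
      have hu' : (1 : ℝ) < u := hu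
      simp only
      rw [abs_of_pos (by linarith), min_eq_left hu'.le, mul_one]
  have key2 : IntegrableOn (fun u : ℝ => |u| ^ (-α - 1) * min 1 |u|) (Set.Iio 0) := by
    have := key.comp_neg
    simpa using this
  have key3 : Integrable (fun u : ℝ => |u| ^ (-α - 1) * min 1 |u|) := by
    rw [← integrableOn_univ, ← Set.Iic_union_Ioi (a := (0 : ℝ))]
    exact IntegrableOn.union ((integrableOn_Iic_iff_integrableOn_Iio (by simp)).2 key2) key
  refine (key3.const_mul (m₁ + m₂)).mono' ?_ ?_
  · have := dens_meas α m₁ m₂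
    exact Measurable.aestronglyMeasurable (by fun_prop)
  · refine ae_of_all _ fun u => ?_
    have hmin : 0 ≤ min 1 |u| := by positivity
    rw [ENNReal.toReal_ofReal (dens_nonneg hm₁ hm₂ _), smul_eq_mul, Real.norm_eq_abs,
      abs_of_nonneg (mul_nonneg (dens_nonneg hm₁ hm₂ _) hmin), ← mul_assoc]
    refine mul_le_mul_of_nonneg_right ?_ hmin
    have hp : 0 ≤ |u| ^ (-α - 1) := by positivity
    unfold dens
    split_ifs with h1 h2
    · rw [abs_of_pos h1] at *
      nlinarith
    · nlinarith
    · positivity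

/-- The Lévy exponent. -/
noncomputable def kk (α m₁ m₂ : ℝ) (t : ℝ) : ℂ :=
  ∫ u : ℝ, (Complex.exp (Complex.I * t * u) - 1) ∂(nuStable α m₁ m₂)

lemma exp_bound (t u : ℝ) : ‖Complex.exp (Complex.I * t * u) - 1‖ ≤ (2 + |t|) * min 1 |u| := by
  have h1 : ‖Complex.exp (Complex.I * t * u) - 1‖ ≤ |t| * |u| := by
    have := Real.norm_exp_I_mul_ofReal_sub_one_le (x := t * u)
    rw [Real.norm_eq_abs, abs_mul] at this
    simpa [mul_assoc] using this
  have h2 : ‖Complex.exp (Complex.I * t * u) - 1‖ ≤ 2 := by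
    refine (norm_sub_le _ _).trans ?_
    have : Complex.I * t * u = Complex.I * ((t * u : ℝ) : ℂ) := by push_cast; ring
    rw [this, Complex.norm_exp_I_mul_ofReal]; norm_num
  rcases le_total 1 |u| with h | h
  · rw [min_eq_left h]; linarith [abs_nonneg t]
  · rw [min_eq_right h]; nlinarith [abs_nonneg t, abs_nonneg u]

lemma exp_integrable {α m₁ m₂ : ℝ} (hα : 0 < α) (hα1 : α < 1) (hm₁ : 0 ≤ m₁) (hm₂ : 0 ≤ m₂)
    (t : ℝ) : Integrable (fun u : ℝ => Complex.exp (Complex.I * t * u) - 1) (nuStable α m₁ m₂) :=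
  ((min_integrable hα hα1 hm₁ hm₂).const_mul (2 + |t|)).mono'
    (Continuous.aestronglyMeasurable (by fun_prop)) (ae_of_all _ (exp_bound t))

lemma kk_continuous {α m₁ m₂ : ℝ} (hα : 0 < α) (hα1 : α < 1) (hm₁ : 0 ≤ m₁) (hm₂ : 0 ≤ m₂) :
    Continuous (kk α m₁ m₂) := by
  rw [continuous_iff_continuousAt]
  intro t
  unfold kk
  refine continuousAt_of_dominated (bound := fun u => (2 + (|t| + 1)) * min 1 |u|) ?_ ?_ ?_ ?_
  · exact Eventually.of_forall fun s => Continuous.aestronglyMeasurable (by fun_prop)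
  · have : ∀ᶠ s in 𝓝 t, |s| < |t| + 1 :=
      continuous_abs.continuousAt.eventually_lt_const (by linarith)
    filter_upwards [this] with s hs
    refine ae_of_all _ fun u => (exp_bound s u).trans ?_
    gcongr
  · exact (min_integrable hα hα1 hm₁ hm₂).const_mul _
  · exact ae_of_all _ fun u => by fun_prop

lemma kk_scale {α m₁ m₂ : ℝ} (hm₁ : 0 ≤ m₁) (hm₂ : 0 ≤ m₂) {r : ℝ} (hr : 0 < r) (t : ℝ) :
    kk α m₁ m₂ (r * t) = ((r ^ α : ℝ) : ℂ) * kk α m₁ m₂ t := by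
  unfold kk
  rw [← nu_scale hm₁ hm₂ hr]
  congr 1; ext u; congr 2; push_cast; ring

lemma kk_zero (α m₁ m₂ : ℝ) : kk α m₁ m₂ 0 = 0 := by simp [kk]

lemma charFun_pow (p : Measure ℝ) [IsProbabilityMeasure p] (n : ℕ) :
    ∃ μ : Measure ℝ, IsProbabilityMeasure μ ∧ ∀ t, charFun μ t = charFun p t ^ n := by
  induction n with
  | zero => exact ⟨Measure.dirac 0, inferInstance, fun t => by simp [charFun_dirac]⟩
  | succ n ih =>
    obtain ⟨μ, hμ, h⟩ := ih
    exact ⟨μ.conv p, inferInstance, fun t => by rw [charFun_conv, h, pow_succ]⟩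

/-- A probability measure approximating the jump part. -/
lemma exists_base {α m₁ m₂ : ℝ} (hα : 0 < α) (hα1 : α < 1) (hm₁ : 0 ≤ m₁) (hm₂ : 0 ≤ m₂) :
    ∃ (p : Measure ℝ) (c : ℝ), IsProbabilityMeasure p ∧ 0 < c ∧ ∀ t : ℝ,
      charFun p t = 1 + (c : ℂ)⁻¹ * ∫ u, Set.indicator {v : ℝ | 1 < |v|}
        (fun v : ℝ => Complex.exp (Complex.I * t * v) - 1) u ∂(nuStable α m₁ m₂) := by
  set S : Set ℝ := {v : ℝ | 1 < |v|} with hS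
  have hSm : MeasurableSet S := measurableSet_lt measurable_const (by fun_prop)
  set ρ := (nuStable α m₁ m₂).restrict S with hρ
  have hfin : IsFiniteMeasure ρ := by
    constructor
    have := (min_integrable hα hα1 hm₁ hm₂ (m₁ := m₁) (m₂ := m₂)).measure_ge_lt_top zero_lt_one
    rw [hρ, Measure.restrict_apply_univ]
    refine lt_of_le_of_lt (measure_mono ?_) this
    intro u hu
    have : 1 < |u| := hu
    simp [this.le]
  set q := ρ + Measure.dirac 0 with hq
  have hq0 : q Set.univ ≠ 0 := by simp [hq]
  have hqt : q Set.univ ≠ ⊤ := measure_ne_top _ _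
  have : NeZero q := ⟨fun h => hq0 (by rw [h]; simp)⟩
  refine ⟨(q Set.univ)⁻¹ • q, (q Set.univ).toReal, inferInstance,
    ENNReal.toReal_pos hq0 hqt, fun t => ?_⟩
  have hqr : (q Set.univ).toReal = ρ.real Set.univ + 1 := by
    rw [← measureReal_def, hq, measureReal_add_apply]; simp
  have hi : Integrable (fun v : ℝ => Complex.exp (Complex.I * t * v) - 1) ρ :=
    (exp_integrable hα hα1 hm₁ hm₂ t).restrict
  have hi' : Integrable (fun v : ℝ => Complex.exp (Complex.I * t * v)) ρ := by
    refine (hi.add (integrable_const (1 : ℂ))).congr (ae_of_all _ fun x => ?_)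
    simp
  rw [integral_indicator hSm, ← hρ, integral_sub hi' (integrable_const _), charFun_apply_real,
    integral_smul_measure, hq, integral_add_measure, integral_dirac, integral_const, ← hq,
    ENNReal.toReal_inv, Complex.real_smul]
  · have e : ∀ x : ℝ, Complex.exp (t * x * Complex.I) = Complex.exp (Complex.I * t * x) := by
      intro x; congr 1; ring
    simp_rw [e]
    have hne : ((ρ.real Set.univ : ℂ) + 1) ≠ 0 := by
      have : (0 : ℝ) < ρ.real Set.univ + 1 := by positivity
      exact_mod_cast this.ne'
    rw [hqr]
    push_cast
    simp
    field_simp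
    ring
  · refine hi'.congr (ae_of_all _ fun x => ?_)
    simp only
    congr 1; ring
  · exact integrable_dirac (by simp)

lemma exists_approx {α m₁ m₂ : ℝ} (hα : 0 < α) (hα1 : α < 1) (hm₁ : 0 ≤ m₁) (hm₂ : 0 ≤ m₂) :
    ∃ μ : ℕ → Measure ℝ, (∀ n, IsProbabilityMeasure (μ n)) ∧
      ∀ t, Tendsto (fun n => charFun (μ n) t) atTop (𝓝 (Complex.exp (kk α m₁ m₂ t))) := by
  obtain ⟨p, c, hp, hc, hpc⟩ := exists_base hα hα1 hm₁ hm₂ (m₁ := m₁) (m₂ := m₂)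
  let r : ℕ → ℝ := fun n => (c / n) ^ (1 / α)
  choose μ hμ hμc using fun n : ℕ => charFun_pow p n
  refine ⟨fun n => (μ n).map (r n * ·), fun n =>
    Measure.isProbabilityMeasure_map (by fun_prop), fun t => ?_⟩
  have hr0 : Tendsto r atTop (𝓝 0) := by
    have h1 : Tendsto (fun n : ℕ => c / (n : ℝ)) atTop (𝓝 0) :=
      tendsto_const_div_atTop_nhds_zero_nat c
    have := h1.rpow_const (p := 1 / α) (Or.inr (by positivity))
    simpa [r, Real.zero_rpow, hα.ne'] using this
  have htr : Tendsto (fun n => ∫ u, Set.indicator {v : ℝ | r n < |v|}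
        (fun v : ℝ => Complex.exp (Complex.I * t * v) - 1) u ∂(nuStable α m₁ m₂)) atTop
        (𝓝 (kk α m₁ m₂ t)) := by
    unfold kk
    refine tendsto_integral_of_dominated_convergence (fun u => (2 + |t|) * min 1 |u|) ?_ ?_ ?_ ?_
    · intro n
      refine AEStronglyMeasurable.indicator (Continuous.aestronglyMeasurable (by fun_prop)) ?_
      exact measurableSet_lt measurable_const (by fun_prop)
    · exact (min_integrable hα hα1 hm₁ hm₂).const_mul _
    · intro n
      exact ae_of_all _ fun u => (norm_indicator_le_norm_self _ _).trans (exp_bound t u)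
    · refine ae_of_all _ fun u => ?_
      by_cases hu : u = 0
      · subst hu
        refine tendsto_const_nhds.congr fun n => ?_
        simp [Set.indicator]
      · refine tendsto_const_nhds.congr' ?_
        filter_upwards [hr0.eventually_lt_const (abs_pos.2 hu)] with n hn
        rw [Set.indicator_of_mem]
        exact hn
  have hlim := Complex.tendsto_one_add_pow_exp_of_tendsto
    (g := fun n => charFun p (r n * t) - 1) (t := kk α m₁ m₂ t) ?_
  · refine hlim.congr fun n => ?_
    rw [charFun_map_mul, hμc]
    congr 1; ring
  · refine htr.congr' ?_
    filter_upwards [eventually_gt_atTop 0] with n hn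
    have hn' : (0 : ℝ) < n := by exact_mod_cast hn
    have hrn : 0 < r n := by positivity
    have hra : (r n) ^ α = c / n := by
      rw [← Real.rpow_mul (by positivity), one_div, inv_mul_cancel₀ hα.ne', Real.rpow_one]
    rw [hpc]
    have := nu_scale hm₁ hm₂ hrn (α := α) (Set.indicator {v : ℝ | r n < |v|}
        (fun v : ℝ => Complex.exp (Complex.I * t * v) - 1))
    rw [hra] at this
    have e : ∀ u : ℝ, Set.indicator {v : ℝ | r n < |v|}
        (fun v : ℝ => Complex.exp (Complex.I * t * v) - 1) (r n * u) =
        Set.indicator {v : ℝ | 1 < |v|}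
        (fun v : ℝ => Complex.exp (Complex.I * ((r n * t : ℝ) : ℂ) * v) - 1) u := by
      intro u
      have hiff : r n < |r n * u| ↔ 1 < |u| := by
        rw [abs_mul, abs_of_pos hrn]
        constructor
        · intro h; by_contra h'; push Not at h'; nlinarith
        · intro h; nlinarith
      simp only [Set.indicator, Set.mem_ofPred_eq, hiff]
      congr 3; push_cast; ring
    simp_rw [e] at this
    rw [this]
    have hcc : (c : ℂ) ≠ 0 := by exact_mod_cast hc.ne'
    have hnn : (n : ℂ) ≠ 0 := by exact_mod_cast hn.ne'
    push_cast
    field_simp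
    ring

lemma fourierT_eq (g : ℝ → ℂ) (ξ : ℝ) : fourierT g ξ = 𝓕 g (ξ / (2 * Real.pi)) := by
  rw [Real.fourier_real_eq_integral_exp_smul]
  unfold fourierT
  refine integral_congr_ae (ae_of_all _ fun x => ?_)
  simp only [smul_eq_mul]
  rw [mul_comm]
  congr 2
  have : (Real.pi : ℂ) ≠ 0 := by exact_mod_cast Real.pi_ne_zero
  push_cast
  field_simp

/-- Inverse Fourier transform. -/
noncomputable def invF (h : ℝ → ℂ) (y : ℝ) : ℂ :=
  ((1 / (2 * Real.pi) : ℝ) : ℂ) * ∫ ξ : ℝ, h ξ * Complex.exp (Complex.I * ξ * y)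

lemma invF_eq (h : ℝ → ℂ) : invF h = 𝓕⁻ (fun w : ℝ => h (2 * Real.pi * w)) := by
  ext y
  rw [Real.fourierInv_eq']
  have := Measure.integral_comp_mul_left (fun ξ : ℝ => h ξ * Complex.exp (Complex.I * ξ * y))
    (2 * Real.pi)
  unfold invF
  rw [abs_of_pos (by positivity), Complex.real_smul, ← one_div] at this
  rw [← this]
  refine integral_congr_ae (ae_of_all _ fun x => ?_)
  simp only [smul_eq_mul]
  rw [mul_comm]
  congr 2
  simp
  ring

lemma fourierT_schwartz (f : SchwartzMap ℝ ℂ) :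
    fourierT f = fun ξ => (𝓕 f : SchwartzMap ℝ ℂ) (ξ / (2 * Real.pi)) := by
  ext ξ
  rw [fourierT_eq, SchwartzMap.fourier_coe]

lemma fourierT_cont (f : SchwartzMap ℝ ℂ) : Continuous (fourierT f) := by
  rw [fourierT_schwartz]
  exact (𝓕 f : SchwartzMap ℝ ℂ).continuous.comp (by fun_prop)

lemma fourierT_int (f : SchwartzMap ℝ ℂ) : Integrable (fourierT f) := by
  rw [fourierT_schwartz]
  exact (𝓕 f : SchwartzMap ℝ ℂ).integrable.comp_div (by positivity)

lemma invF_fourierT (f : SchwartzMap ℝ ℂ) (y : ℝ) : invF (fourierT f) y = f y := by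
  rw [invF_eq]
  have : (fun w : ℝ => fourierT f (2 * Real.pi * w)) = 𝓕 (f : ℝ → ℂ) := by
    ext w
    rw [fourierT_eq]
    congr 1
    field_simp
  rw [this, f.continuous.fourierInv_fourier_eq f.integrable]
  rw [← SchwartzMap.fourier_coe]
  exact (𝓕 f : SchwartzMap ℝ ℂ).integrable

lemma fourierT_invF {h : ℝ → ℂ} (hc : Continuous h) (hi : Integrable h)
    (hI : Integrable (invF h)) (ξ : ℝ) : fourierT (invF h) ξ = h ξ := by
  rw [invF_eq] at hI
  rw [fourierT_eq, invF_eq, Continuous.fourier_fourierInv_eq]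
  · congr 1; field_simp
  · exact hc.comp (by fun_prop)
  · exact hi.comp_mul_left' (by positivity)
  · have := hI.comp_neg
    refine this.congr (ae_of_all _ fun y => ?_)
    simp only
    rw [Real.fourierInv_eq_fourier_neg, neg_neg]

lemma invF_charFun (f : SchwartzMap ℝ ℂ) (μ : Measure ℝ) [IsProbabilityMeasure μ] (y : ℝ) :
    invF (fun ξ => fourierT f ξ * charFun μ ξ) y = ∫ u, f (y + u) ∂μ := by
  have h1 : ∀ u, f (y + u) = ((1 / (2 * Real.pi) : ℝ) : ℂ) *
      ∫ ξ : ℝ, fourierT f ξ * Complex.exp (Complex.I * ξ * ((y + u : ℝ) : ℂ)) := fun u =>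
    (invF_fourierT f (y + u)).symm
  simp_rw [h1]
  rw [integral_const_mul, integral_integral_swap]
  · unfold invF
    congr 1
    refine integral_congr_ae (ae_of_all _ fun ξ => ?_)
    simp only
    rw [charFun_apply_real, mul_assoc, ← integral_mul_const, ← integral_const_mul]
    refine integral_congr_ae (ae_of_all _ fun u => ?_)
    simp only
    rw [← Complex.exp_add]
    congr 2
    push_cast; ring
  · have hF : Integrable (fun z : ℝ × ℝ => fourierT f z.2) (μ.prod volume) :=
      (fourierT_int f).comp_snd μ
    have hcont := fourierT_cont f
    refine hF.norm.mono' (Continuous.aestronglyMeasurable ?_) (ae_of_all _ fun z => ?_)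
    · unfold Function.uncurry
      simp only
      fun_prop
    · simp only [Function.uncurry]
      rw [norm_mul]
      have : Complex.I * z.2 * ((y + z.1 : ℝ) : ℂ) = Complex.I * ((z.2 * (y + z.1) : ℝ) : ℂ) := by
        push_cast; ring
      rw [this, Complex.norm_exp_I_mul_ofReal, mul_one]

lemma integrable_invF (f : SchwartzMap ℝ ℂ) (μ : ℕ → Measure ℝ)
    (hμ : ∀ n, IsProbabilityMeasure (μ n)) (φ : ℝ → ℂ)
    (hφ : ∀ t, Tendsto (fun n => charFun (μ n) t) atTop (𝓝 (φ t))) :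
    Integrable (invF (fun ξ => fourierT f ξ * φ ξ)) := by
  set G : ℕ → ℝ → ℂ := fun n y => ∫ u, f (y + u) ∂(μ n) with hG
  have hfc := f.continuous
  have hlim : ∀ y, Tendsto (fun n => G n y) atTop (𝓝 (invF (fun ξ => fourierT f ξ * φ ξ) y)) := by
    intro y
    simp only [hG]
    simp_rw [← invF_charFun]
    unfold invF
    refine Tendsto.const_mul _ ?_
    refine tendsto_integral_of_dominated_convergence (fun ξ => ‖fourierT f ξ‖) ?_ ?_ ?_ ?_
    · intro n
      refine ((fourierT_cont f).aestronglyMeasurable.mul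
        stronglyMeasurable_charFun.aestronglyMeasurable).mul
        (Continuous.aestronglyMeasurable (by fun_prop))
    · exact (fourierT_int f).norm
    · intro n
      refine ae_of_all _ fun ξ => ?_
      have : Complex.I * ξ * y = Complex.I * ((ξ * y : ℝ) : ℂ) := by push_cast; ring
      rw [norm_mul, norm_mul, this, Complex.norm_exp_I_mul_ofReal, mul_one]
      exact mul_le_of_le_one_right (norm_nonneg _) (norm_charFun_le_one _)
    · exact ae_of_all _ fun ξ => ((hφ ξ).const_mul _).mul_const _
  have hGm : ∀ n, StronglyMeasurable (G n) := fun n => by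
    refine StronglyMeasurable.integral_prod_right (f := fun y u => f (y + u)) ?_
    refine Continuous.stronglyMeasurable ?_
    unfold Function.uncurry
    fun_prop
  have hGb : ∀ n, ∫⁻ y, ‖G n y‖ₑ ≤ ∫⁻ y, ‖f y‖ₑ := by
    intro n
    calc ∫⁻ y, ‖G n y‖ₑ ≤ ∫⁻ y, ∫⁻ u, ‖f (y + u)‖ₑ ∂(μ n) :=
          lintegral_mono fun y => enorm_integral_le_lintegral_enorm _
      _ = ∫⁻ u, ∫⁻ y, ‖f (y + u)‖ₑ ∂volume ∂(μ n) := by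
          refine lintegral_lintegral_swap (Continuous.aemeasurable ?_)
          unfold Function.uncurry
          fun_prop
      _ = ∫⁻ y, ‖f y‖ₑ := by
          simp [lintegral_add_right_eq_self (fun y => ‖f y‖ₑ)]
  refine ⟨aestronglyMeasurable_of_tendsto_ae atTop (fun n => (hGm n).aestronglyMeasurable)
    (ae_of_all _ hlim), ?_⟩
  have hfat : ∫⁻ y, ‖invF (fun ξ => fourierT f ξ * φ ξ) y‖ₑ ≤
      liminf (fun n => ∫⁻ y, ‖G n y‖ₑ) atTop := by
    have e : ∀ y, ‖invF (fun ξ => fourierT f ξ * φ ξ) y‖ₑ = liminf (fun n => ‖G n y‖ₑ) atTop :=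
      fun y => (hlim y).enorm.liminf_eq.symm
    simp_rw [e]
    exact lintegral_liminf_le fun n => (hGm n).measurable.enorm
  refine lt_of_le_of_lt (hfat.trans ?_) (f.integrable (μ := volume)).2
  refine (liminf_le_liminf (Eventually.of_forall hGb)).trans ?_
  simp

lemma psi_eq (α m₁ m₂ β t : ℝ) : psi01 α m₁ m₂ β t =
    Complex.exp (Complex.I * t * (Gamma01 α m₁ m₂ β) + kk α m₁ m₂ t) := rfl

lemma psi_ne (α m₁ m₂ β t : ℝ) : psi01 α m₁ m₂ β t ≠ 0 := Complex.exp_ne_zero _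

lemma psi_cont {α m₁ m₂ β : ℝ} (hα : 0 < α) (hα1 : α < 1) (hm₁ : 0 ≤ m₁) (hm₂ : 0 ≤ m₂) :
    Continuous (psi01 α m₁ m₂ β) := by
  have := kk_continuous hα hα1 hm₁ hm₂
  have e : psi01 α m₁ m₂ β = fun t : ℝ =>
    Complex.exp (Complex.I * t * (Gamma01 α m₁ m₂ β) + kk α m₁ m₂ t) := rfl
  rw [e]
  fun_prop

/-- The multiplier. -/
noncomputable def MM (α m₁ m₂ β s ξ : ℝ) : ℂ :=
  psi01 α m₁ m₂ β ξ / psi01 α m₁ m₂ β (Real.exp (-s) * ξ)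

lemma MM_eq {α m₁ m₂ β : ℝ} (hα : 0 < α) (hm₁ : 0 ≤ m₁) (hm₂ : 0 ≤ m₂)
    {s : ℝ} (hs : 0 ≤ s) : ∃ r γ : ℝ, ∀ ξ : ℝ, MM α m₁ m₂ β s ξ =
      Complex.exp (kk α m₁ m₂ (r * ξ)) * Complex.exp (γ * ξ * Complex.I) := by
  set θ : ℝ := 1 - (Real.exp (-s)) ^ α with hθ
  have hθ0 : 0 ≤ θ := by
    have : (Real.exp (-s)) ^ α ≤ 1 :=
      Real.rpow_le_one (Real.exp_pos _).le (Real.exp_le_one_iff.2 (by linarith)) hα.le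
    linarith
  have hk : ∃ r : ℝ, ∀ ξ, kk α m₁ m₂ (r * ξ) = θ * kk α m₁ m₂ ξ := by
    rcases hθ0.eq_or_lt with h | h
    · exact ⟨0, fun ξ => by rw [← h]; simp [kk_zero]⟩
    · refine ⟨θ ^ (1 / α), fun ξ => ?_⟩
      rw [kk_scale hm₁ hm₂ (by positivity), ← Real.rpow_mul hθ0, one_div, inv_mul_cancel₀ hα.ne',
        Real.rpow_one]
  obtain ⟨r, hr⟩ := hk
  refine ⟨r, (1 - Real.exp (-s)) * Gamma01 α m₁ m₂ β, fun ξ => ?_⟩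
  rw [hr]
  unfold MM
  rw [psi_eq, psi_eq, kk_scale hm₁ hm₂ (Real.exp_pos _), ← Complex.exp_sub, ← Complex.exp_add]
  congr 1
  rw [hθ]
  push_cast
  ring

lemma MM_approx {α m₁ m₂ β : ℝ} (hα : 0 < α) (hα1 : α < 1) (hm₁ : 0 ≤ m₁) (hm₂ : 0 ≤ m₂)
    {s : ℝ} (hs : 0 ≤ s) : ∃ μ : ℕ → Measure ℝ, (∀ n, IsProbabilityMeasure (μ n)) ∧
      ∀ t, Tendsto (fun n => charFun (μ n) t) atTop (𝓝 (MM α m₁ m₂ β s t)) := by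
  obtain ⟨r, γ, h⟩ := MM_eq (β := β) hα hm₁ hm₂ hs
  obtain ⟨μ, hμ, hl⟩ := exists_approx hα hα1 hm₁ hm₂ (m₁ := m₁) (m₂ := m₂)
  refine ⟨fun n => ((μ n).map (r * ·)).map (· + γ), fun n => ?_, fun t => ?_⟩
  · have : IsProbabilityMeasure ((μ n).map (r * ·)) :=
      Measure.isProbabilityMeasure_map (by fun_prop)
    exact Measure.isProbabilityMeasure_map (by fun_prop)
  · rw [h]
    have := (hl (r * t)).mul_const (Complex.exp (γ * t * Complex.I))
    refine this.congr fun n => ?_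
    rw [charFun_map_add_const, charFun_map_mul]
    simp [mul_comm]

lemma MM_cont {α m₁ m₂ β : ℝ} (hα : 0 < α) (hα1 : α < 1) (hm₁ : 0 ≤ m₁) (hm₂ : 0 ≤ m₂) (s : ℝ) :
    Continuous (MM α m₁ m₂ β s) := by
  have := psi_cont (β := β) hα hα1 hm₁ hm₂
  unfold MM
  exact this.div (this.comp (by fun_prop)) fun ξ => psi_ne _ _ _ _ _

lemma MM_norm {α m₁ m₂ β : ℝ} (hα : 0 < α) (hα1 : α < 1) (hm₁ : 0 ≤ m₁) (hm₂ : 0 ≤ m₂)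
    {s : ℝ} (hs : 0 ≤ s) (ξ : ℝ) : ‖MM α m₁ m₂ β s ξ‖ ≤ 1 := by
  obtain ⟨μ, hμ, hl⟩ := MM_approx (β := β) hα hα1 hm₁ hm₂ hs
  exact le_of_tendsto (hl ξ).norm (Eventually.of_forall fun n => norm_charFun_le_one _)

lemma Pt_eq (α m₁ m₂ β s : ℝ) (g : ℝ → ℂ) (x : ℝ) : Pt α m₁ m₂ β s g x =
    invF (fun ξ => fourierT g ξ * MM α m₁ m₂ β s ξ) (Real.exp (-s) * x) := by
  unfold Pt invF MM
  congr 1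
  refine integral_congr_ae (ae_of_all _ fun ξ => ?_)
  simp only
  have : Complex.I * ξ * x * ((Real.exp (-s) : ℝ) : ℂ) =
      Complex.I * ξ * ((Real.exp (-s) * x : ℝ) : ℂ) := by push_cast; ring
  rw [this]
  ring

lemma partB {α m₁ m₂ β : ℝ} (hα : 0 < α) (hα1 : α < 1) (hm₁ : 0 ≤ m₁) (hm₂ : 0 ≤ m₂)
    (f : SchwartzMap ℝ ℂ) {s : ℝ} (hs : 0 ≤ s) :
      Integrable (Pt α m₁ m₂ β s (⇑f)) (volume : Measure ℝ) ∧
      ∀ ξ : ℝ, fourierT (Pt α m₁ m₂ β s (⇑f)) ξ =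
        ((Real.exp s : ℝ) : ℂ) * fourierT (⇑f) (Real.exp s * ξ) *
          psi01 α m₁ m₂ β (Real.exp s * ξ) / psi01 α m₁ m₂ β ξ := by
  obtain ⟨μ, hμ, hl⟩ := MM_approx (β := β) hα hα1 hm₁ hm₂ hs
  have hI := integrable_invF f μ hμ _ hl
  set h : ℝ → ℂ := fun ξ => fourierT f ξ * MM α m₁ m₂ β s ξ with hh
  have hP : Pt α m₁ m₂ β s f = fun x => invF h (Real.exp (-s) * x) := by
    ext x; exact Pt_eq _ _ _ _ _ _ _
  have hc : Continuous h := (fourierT_cont f).mul (MM_cont hα hα1 hm₁ hm₂ s)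
  have hi : Integrable h := by
    refine (fourierT_int f).norm.mono' hc.aestronglyMeasurable (ae_of_all _ fun ξ => ?_)
    rw [hh, norm_mul]
    exact mul_le_of_le_one_right (norm_nonneg _) (MM_norm hα hα1 hm₁ hm₂ hs ξ)
  rw [hP]
  refine ⟨hI.comp_mul_left' (Real.exp_pos _).ne', fun ξ => ?_⟩
  have key := fourierT_invF hc hi hI (Real.exp s * ξ)
  have hee : Real.exp (-s) * Real.exp s = 1 := by rw [← Real.exp_add]; simp
  have hsub := Measure.integral_comp_mul_left (fun y : ℝ => invF h y *
    Complex.exp (-(Complex.I * y * ((Real.exp s * ξ : ℝ) : ℂ)))) (Real.exp (-s))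
  have e1 : fourierT (fun x => invF h (Real.exp (-s) * x)) ξ =
      ((Real.exp s : ℝ) : ℂ) * fourierT (invF h) (Real.exp s * ξ) := by
    unfold fourierT
    rw [abs_of_pos (by positivity), ← Real.exp_neg, neg_neg, Complex.real_smul] at hsub
    rw [← hsub]
    refine integral_congr_ae (ae_of_all _ fun x => ?_)
    simp only
    congr 3
    have : ((Real.exp (-s) : ℝ) : ℂ) * ((Real.exp s : ℝ) : ℂ) = 1 := by exact_mod_cast hee
    push_cast at this ⊢
    linear_combination (-Complex.I * x * ξ) * this
  rw [e1, key, hh]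
  simp only [MM]
  rw [← mul_assoc (Real.exp (-s)), hee, one_mul]
  ring

end StableAux

theorem stmt_11 (α m₁ m₂ β : ℝ) (hα : 0 < α) (hα1 : α < 1)
    (hm₁ : 0 ≤ m₁) (hm₂ : 0 ≤ m₂) (hm : 0 < m₁ + m₂)
    (f : SchwartzMap ℝ ℂ) :
    (∀ x : ℝ, Pt α m₁ m₂ β 0 (⇑f) x = f x) ∧
    (∀ s : ℝ, 0 ≤ s →
      Integrable (Pt α m₁ m₂ β s (⇑f)) (volume : Measure ℝ) ∧
      ∀ ξ : ℝ, fourierT (Pt α m₁ m₂ β s (⇑f)) ξ =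
        ((Real.exp s : ℝ) : ℂ) * fourierT (⇑f) (Real.exp s * ξ) *
          psi01 α m₁ m₂ β (Real.exp s * ξ) / psi01 α m₁ m₂ β ξ) ∧
    (∀ s : ℝ, 0 ≤ s → ∀ t : ℝ, 0 ≤ t → ∀ x : ℝ,
      ((1 / (2 * Real.pi) : ℝ) : ℂ) *
        (∫ ξ : ℝ, fourierT (Pt α m₁ m₂ β s (⇑f)) ξ *
          Complex.exp (Complex.I * ξ * x * ((Real.exp (-t) : ℝ) : ℂ)) *
          psi01 α m₁ m₂ β ξ / psi01 α m₁ m₂ β (Real.exp (-t) * ξ)) =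
        Pt α m₁ m₂ β (t + s) (⇑f) x) := by
  have hB := fun (s : ℝ) (hs : 0 ≤ s) => StableAux.partB (β := β) hα hα1 hm₁ hm₂ f hs
  refine ⟨fun x => ?_, hB, fun s hs t ht x => ?_⟩
  · rw [StableAux.Pt_eq]
    have : (fun ξ => fourierT f ξ * StableAux.MM α m₁ m₂ β 0 ξ) = fourierT f := by
      ext ξ
      simp [StableAux.MM, StableAux.psi_ne]
    rw [this, StableAux.invF_fourierT]
    simp
  · simp_rw [(hB s hs).2]
    unfold Pt
    congr 1
    have hsub := Measure.integral_comp_mul_left (fun ξ : ℝ => fourierT f ξ *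
      Complex.exp (Complex.I * ξ * x * ((Real.exp (-(t + s)) : ℝ) : ℂ)) *
      psi01 α m₁ m₂ β ξ / psi01 α m₁ m₂ β (Real.exp (-(t + s)) * ξ)) (Real.exp s)
    have hE : Real.exp s ≠ 0 := (Real.exp_pos s).ne'
    rw [abs_of_pos (by positivity), eq_inv_smul_iff₀ hE, Complex.real_smul,
      ← integral_const_mul] at hsub
    rw [← hsub]
    refine integral_congr_ae (ae_of_all _ fun ξ => ?_)
    simp only
    have hee : Real.exp (-(t + s)) * Real.exp s = Real.exp (-t) := by
      rw [← Real.exp_add]; congr 1; ring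
    have hee' : ((Real.exp (-(t + s)) : ℝ) : ℂ) * ((Real.exp s : ℝ) : ℂ) =
        ((Real.exp (-t) : ℝ) : ℂ) := by exact_mod_cast hee
    have h3 : Complex.I * ((Real.exp s * ξ : ℝ) : ℂ) * x * ((Real.exp (-(t + s)) : ℝ) : ℂ) =
        Complex.I * ξ * x * ((Real.exp (-t) : ℝ) : ℂ) := by
      rw [← hee', Complex.ofReal_mul]; ring
    rw [← mul_assoc (Real.exp (-(t + s))), hee, h3]
    have h1 := StableAux.psi_ne α m₁ m₂ β ξ
    have h2 := StableAux.psi_ne α m₁ m₂ β (Real.exp (-t) * ξ)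
    field_simp
end

section
/- (Infinitesimal generator of the stable semigroup, α ∈ (0,1).) Let α ∈ (0,1), m₁, m₂ ∈ [0,∞) with m₁ + m₂ > 0, β ∈ ℝ, and let f be a complex-valued Schwartz function on ℝ. Then for every x ∈ ℝ, lim_{t→0⁺} (P_t f(x) - f(x))/t = -x f'(x) + Γ_α f'(x) + m₁ ∫₀^∞ f'(x+u) u^{-α} du - m₂ ∫₀^∞ f'(x-u) u^{-α} du, where both integrals converge absolutely (their sum equals ∫_ℝ f'(x+u) u ν_α(du)). -/
open MeasureTheory

noncomputable def Kst (α ξ : ℝ) : ℂ :=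
  ∫ u in Set.Ioi (0 : ℝ), (Complex.exp (Complex.I * ξ * u) - 1) * ((u ^ (-α - 1) : ℝ) : ℂ)

noncomputable def wst (α u : ℝ) : ℝ := 2 * min 1 u * u ^ (-α - 1)

lemma rpow_int_Ioc (α : ℝ) (hα1 : α < 1) :
    IntegrableOn (fun u : ℝ => u ^ (-α)) (Set.Ioc 0 1) := by
  have := intervalIntegral.intervalIntegrable_rpow' (a := 0) (b := 1) (r := -α) (by linarith)
  rwa [intervalIntegrable_iff_integrableOn_Ioc_of_le (by norm_num)] at this

lemma wst_int (α : ℝ) (hα : 0 < α) (hα1 : α < 1) : IntegrableOn (wst α) (Set.Ioi 0) := by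
  rw [← Set.Ioc_union_Ioi_eq_Ioi (zero_le_one (α := ℝ))]
  refine IntegrableOn.union ?_ ?_
  · refine IntegrableOn.congr_fun ((rpow_int_Ioc α hα1).const_mul 2) ?_ measurableSet_Ioc
    intro u hu
    have h : u ^ (-α) = u * u ^ (-α - 1) := by
      rw [Real.rpow_sub_one hu.1.ne']; field_simp [hu.1.ne']
    simp only [wst, min_eq_right hu.2, h]; ring
  · refine IntegrableOn.congr_fun ((integrableOn_Ioi_rpow_of_lt (a := -α - 1) (c := 1)
      (by linarith) one_pos).const_mul 2) ?_ measurableSet_Ioi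
    intro u hu
    have hu : 1 < u := hu
    simp only [wst, min_eq_left hu.le]; ring

lemma wst_nonneg (α u : ℝ) (hu : 0 < u) : 0 ≤ wst α u := by
  unfold wst; positivity

lemma kern_bound (α ξ u : ℝ) (hu : 0 < u) :
    ‖(Complex.exp (Complex.I * ξ * u) - 1) * ((u ^ (-α - 1) : ℝ) : ℂ)‖ ≤ (1 + |ξ|) * wst α u := by
  have e : Complex.I * ξ * u = Complex.I * ((ξ * u : ℝ) : ℂ) := by push_cast; ring
  have hp : 0 ≤ u ^ (-α - 1) := by positivity
  rw [norm_mul, Complex.norm_real, Real.norm_of_nonneg hp, e]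
  have h1 := Real.norm_exp_I_mul_ofReal_sub_one_le (x := ξ * u)
  rw [Real.norm_eq_abs, abs_mul, abs_of_pos hu] at h1
  have h2 : ‖Complex.exp (Complex.I * ((ξ * u : ℝ) : ℂ)) - 1‖ ≤ 2 := by
    refine (norm_sub_le _ _).trans ?_
    rw [Complex.norm_exp_I_mul_ofReal]; norm_num
  have h3 : ‖Complex.exp (Complex.I * ((ξ * u : ℝ) : ℂ)) - 1‖ ≤ (1 + |ξ|) * (2 * min 1 u) := by
    rcases le_total 1 u with h | h
    · rw [min_eq_left h]; nlinarith [abs_nonneg ξ]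
    · rw [min_eq_right h]; nlinarith [abs_nonneg ξ, mul_nonneg (abs_nonneg ξ) hu.le]
  unfold wst
  calc _ ≤ (1 + |ξ|) * (2 * min 1 u) * u ^ (-α - 1) := by gcongr
    _ = _ := by ring

lemma kern_meas (α : ℝ) : Measurable (fun p : ℝ × ℝ =>
    (Complex.exp (Complex.I * p.1 * p.2) - 1) * ((p.2 ^ (-α - 1) : ℝ) : ℂ)) := by
  fun_prop

lemma kern_int (α ξ : ℝ) (hα : 0 < α) (hα1 : α < 1) : IntegrableOn (fun u : ℝ =>
    (Complex.exp (Complex.I * ξ * u) - 1) * ((u ^ (-α - 1) : ℝ) : ℂ)) (Set.Ioi 0) := by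
  refine Integrable.mono' ((wst_int α hα hα1).const_mul (1 + |ξ|)) ?_ ?_
  · exact ((kern_meas α).comp (measurable_const.prodMk measurable_id)).aestronglyMeasurable
  · filter_upwards [ae_restrict_mem measurableSet_Ioi] with u hu using kern_bound α ξ u hu

lemma Kst_meas (α : ℝ) : Measurable (Kst α) := by
  have := (kern_meas α).stronglyMeasurable.integral_prod_right'
    (ν := volume.restrict (Set.Ioi (0:ℝ)))
  exact this.measurable

lemma Kst_bound (α ξ : ℝ) (hα : 0 < α) (hα1 : α < 1) :
    ‖Kst α ξ‖ ≤ (1 + |ξ|) * ∫ u in Set.Ioi (0:ℝ), wst α u := by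
  rw [← integral_const_mul]
  refine norm_integral_le_of_norm_le ((wst_int α hα hα1).const_mul (1 + |ξ|)) ?_
  filter_upwards [ae_restrict_mem measurableSet_Ioi] with u hu using kern_bound α ξ u hu

lemma Kst_re (α ξ : ℝ) (hα : 0 < α) (hα1 : α < 1) : (Kst α ξ).re ≤ 0 := by
  have h := integral_re (𝕜 := ℂ) (kern_int α ξ hα hα1)
  have : (Kst α ξ).re = ∫ u in Set.Ioi (0:ℝ), RCLike.re
    ((Complex.exp (Complex.I * ξ * u) - 1) * ((u ^ (-α - 1) : ℝ) : ℂ)) := by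
      rw [h]; rfl
  rw [this]
  refine setIntegral_nonpos measurableSet_Ioi ?_
  intro u hu
  have hu : 0 < u := hu
  have e : Complex.I * ξ * u = ((ξ * u : ℝ) : ℂ) * Complex.I := by push_cast; ring
  have hp : 0 ≤ u ^ (-α - 1) := by positivity
  rw [e]
  have : RCLike.re ((Complex.exp (((ξ * u : ℝ) : ℂ) * Complex.I) - 1) * ((u ^ (-α - 1) : ℝ) : ℂ))
    = (Real.cos (ξ * u) - 1) * u ^ (-α - 1) := by
    change Complex.re _ = _
    rw [Complex.re_mul_ofReal, Complex.sub_re, Complex.exp_ofReal_mul_I_re]; simp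
  rw [this]
  nlinarith [Real.cos_le_one (ξ * u)]

lemma Kst_scale (α ξ c : ℝ) (hc : 0 < c) : Kst α (c * ξ) = ((c ^ α : ℝ) : ℂ) * Kst α ξ := by
  have h := integral_comp_mul_left_Ioi (fun u : ℝ => (Complex.exp (Complex.I * ξ * u) - 1) *
    ((u ^ (-α - 1) : ℝ) : ℂ)) 0 hc
  rw [mul_zero] at h
  have h2 : Kst α ξ = (c : ℂ) * ∫ u in Set.Ioi (0:ℝ),
    (Complex.exp (Complex.I * ξ * ((c * u : ℝ) : ℂ)) - 1) * (((c * u) ^ (-α - 1) : ℝ) : ℂ) := by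
    rw [h, Complex.real_smul]
    push_cast
    rw [← mul_assoc, mul_inv_cancel₀ (by exact_mod_cast hc.ne'), one_mul]; rfl
  rw [h2, ← mul_assoc, ← integral_const_mul]
  refine setIntegral_congr_fun measurableSet_Ioi ?_
  intro u hu
  have hu : 0 < u := hu
  have e1 : Complex.I * ((c * ξ : ℝ) : ℂ) * u = Complex.I * ξ * ((c * u : ℝ) : ℂ) := by
    push_cast; ring
  have e2 : u ^ (-α - 1) = c ^ α * c * (c * u) ^ (-α - 1) := by
    rw [Real.mul_rpow hc.le hu.le, Real.rpow_sub_one hc.ne', Real.rpow_neg hc.le]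
    field_simp
  simp only
  rw [e1, e2]; push_cast; ring

lemma nu_integral (α m₁ m₂ ξ : ℝ) (hα : 0 < α) (hα1 : α < 1) (hm₁ : 0 ≤ m₁) (hm₂ : 0 ≤ m₂) :
    ∫ u : ℝ, (Complex.exp (Complex.I * ξ * u) - 1) ∂(nuStable α m₁ m₂) =
      m₁ * Kst α ξ + m₂ * Kst α (-ξ) := by
  unfold nuStable
  rw [integral_withDensity_eq_integral_toReal_smul]
  rotate_left
  · refine Measurable.ennreal_ofReal ?_
    refine Measurable.ite measurableSet_Ioi (by fun_prop) ?_
    exact Measurable.ite measurableSet_Iio (by fun_prop) (by fun_prop)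
  · exact Filter.Eventually.of_forall fun _ => ENNReal.ofReal_lt_top
  set F : ℝ → ℂ := fun u => (ENNReal.ofReal (if 0 < u then m₁ * u ^ (-α - 1)
    else if u < 0 then m₂ * |u| ^ (-α - 1) else 0)).toReal • (Complex.exp (Complex.I * ξ * u) - 1)
  have hpos : Set.EqOn F (fun u => (m₁ : ℂ) * ((Complex.exp (Complex.I * ξ * u) - 1) *
      ((u ^ (-α - 1) : ℝ) : ℂ))) (Set.Ioi 0) := by
    intro u hu
    have hu : 0 < u := hu
    simp only [F, if_pos hu]
    rw [ENNReal.toReal_ofReal (by positivity), Complex.real_smul]; push_cast; ring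
  have hneg : Set.EqOn (fun u => F (-u)) (fun u => (m₂ : ℂ) *
      ((Complex.exp (Complex.I * ((-ξ : ℝ) : ℂ) * u) - 1) *
      ((u ^ (-α - 1) : ℝ) : ℂ))) (Set.Ioi 0) := by
    intro u hu
    have hu : 0 < u := hu
    have h1 : ¬ (0 < -u) := by linarith
    have h2 : -u < 0 := by linarith
    simp only [F, if_neg h1, if_pos h2]
    rw [abs_neg, abs_of_pos hu, ENNReal.toReal_ofReal (by positivity), Complex.real_smul]
    push_cast
    rw [show Complex.I * (ξ:ℂ) * -(u:ℂ) = Complex.I * -(ξ:ℂ) * (u:ℂ) by ring]; ring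
  have i1 : IntegrableOn F (Set.Ioi 0) :=
    IntegrableOn.congr_fun ((kern_int α ξ hα hα1).const_mul (m₁ : ℂ)) hpos.symm measurableSet_Ioi
  have i2' : IntegrableOn (fun u => F (-u)) (Set.Ioi 0) :=
    IntegrableOn.congr_fun ((kern_int α (-ξ) hα hα1).const_mul (m₂ : ℂ)) hneg.symm measurableSet_Ioi
  have i2 : IntegrableOn F (Set.Iic 0) := by
    have h3 := integrableOn_Ici_iff_integrableOn_Ioi (f := fun u => F (-u)) (b := (0:ℝ)) (μ := volume)
    have h4 := (Measure.measurePreserving_neg (volume : Measure ℝ)).integrableOn_comp_preimage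
      (Homeomorph.neg ℝ).measurableEmbedding (f := F) (s := Set.Iic 0)
    rw [← h4]
    simpa [Function.comp_def] using h3.mpr i2'
  rw [← setIntegral_univ, ← Set.Iic_union_Ioi (a := (0:ℝ)),
    setIntegral_union (Set.Iic_disjoint_Ioi le_rfl) measurableSet_Ioi i2 i1,
    setIntegral_congr_fun measurableSet_Ioi hpos, integral_const_mul]
  have h := integral_comp_neg_Ioi 0 F
  rw [neg_zero] at h
  rw [← h, setIntegral_congr_fun measurableSet_Ioi hneg, integral_const_mul, add_comm]
  rfl

lemma rpow_mul_int (α : ℝ) (hα : 0 < α) (hα1 : α < 1) (h : ℝ → ℂ) (hc : Continuous h)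
    (C : ℝ) (hb : ∀ u, ‖h u‖ ≤ C) (hi : Integrable h) :
    IntegrableOn (fun u : ℝ => h u * ((u ^ (-α) : ℝ) : ℂ)) (Set.Ioi 0) := by
  have hm : Measurable (fun u : ℝ => h u * ((u ^ (-α) : ℝ) : ℂ)) :=
    hc.measurable.mul (by fun_prop)
  rw [← Set.Ioc_union_Ioi_eq_Ioi (zero_le_one (α := ℝ))]
  refine IntegrableOn.union ?_ ?_
  · refine Integrable.mono' ((rpow_int_Ioc α hα1).const_mul C) hm.aestronglyMeasurable ?_
    filter_upwards [ae_restrict_mem measurableSet_Ioc] with u hu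
    have hp : 0 ≤ u ^ (-α) := Real.rpow_nonneg hu.1.le _
    rw [norm_mul, Complex.norm_real, Real.norm_of_nonneg hp]
    exact mul_le_mul_of_nonneg_right (hb u) hp
  · refine Integrable.mono' hi.norm.integrableOn hm.aestronglyMeasurable ?_
    filter_upwards [ae_restrict_mem measurableSet_Ioi] with u hu
    have hu : 1 < u := hu
    have hp : 0 ≤ u ^ (-α) := Real.rpow_nonneg (by linarith) _
    rw [norm_mul, Complex.norm_real, Real.norm_of_nonneg hp]
    exact mul_le_of_le_one_right (norm_nonneg _)
      (Real.rpow_le_one_of_one_le_of_nonpos hu.le (by linarith))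

lemma ibp (α : ℝ) (hα : 0 < α) (hα1 : α < 1) (g g' : ℝ → ℂ)
    (hd : ∀ u, HasDerivAt g (g' u) u) (hc : Continuous g') (C D : ℝ)
    (hb : ∀ u, ‖g' u‖ ≤ C) (hb0 : ∀ u, ‖g u‖ ≤ D) (hi : Integrable g') :
    (α : ℂ) * ∫ u in Set.Ioi (0:ℝ), (g u - g 0) * ((u ^ (-α - 1) : ℝ) : ℂ) =
      ∫ u in Set.Ioi (0:ℝ), g' u * ((u ^ (-α) : ℝ) : ℂ) := by
  have hC : 0 ≤ C := (norm_nonneg _).trans (hb 0)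
  have hD : 0 ≤ D := (norm_nonneg _).trans (hb0 0)
  have lip : ∀ u, 0 < u → ‖g u - g 0‖ ≤ C * u := by
    intro u hu
    have := Convex.norm_image_sub_le_of_norm_hasDerivWithin_le (f := g) (f' := g') (C := C)
      (s := Set.univ) (x := 0) (y := u) (fun x _ => (hd x).hasDerivWithinAt) (fun x _ => hb x)
      convex_univ trivial trivial
    simpa [abs_of_pos hu] using this
  have bd : ∀ u, ‖g u - g 0‖ ≤ 2 * D := fun u =>
    (norm_sub_le _ _).trans (by linarith [hb0 u, hb0 0])
  have gc : Continuous g := continuous_iff_continuousAt.mpr fun u => (hd u).continuousAt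
  have hI1 : IntegrableOn (fun u : ℝ => (g u - g 0) * ((u ^ (-α - 1) : ℝ) : ℂ)) (Set.Ioi 0) := by
    refine Integrable.mono' ((wst_int α hα hα1).const_mul (C + 2 * D)) ?_ ?_
    · exact Measurable.aestronglyMeasurable
        ((gc.measurable.sub measurable_const).mul (by fun_prop))
    · filter_upwards [ae_restrict_mem measurableSet_Ioi] with u hu
      have hu : 0 < u := hu
      have hp : 0 ≤ u ^ (-α - 1) := by positivity
      rw [norm_mul, Complex.norm_real, Real.norm_of_nonneg hp]
      have h3 : ‖g u - g 0‖ ≤ (C + 2 * D) * (2 * min 1 u) := by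
        rcases le_total 1 u with h | h
        · rw [min_eq_left h]; nlinarith [bd u]
        · rw [min_eq_right h]; nlinarith [lip u hu, mul_nonneg hC hu.le, mul_nonneg hD hu.le]
      unfold wst
      calc _ ≤ (C + 2 * D) * (2 * min 1 u) * u ^ (-α - 1) := by gcongr
        _ = _ := by ring
  have hI2 := rpow_mul_int α hα hα1 g' hc C hb hi
  have key := integral_Ioi_mul_deriv_eq_deriv_mul (a := (0:ℝ)) (a' := (0:ℂ)) (b' := (0:ℂ))
    (u := fun u => g u - g 0) (u' := g')
    (v := fun u : ℝ => ((u ^ (-α) : ℝ) : ℂ))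
    (v' := fun u : ℝ => ((-α * u ^ (-α - 1) : ℝ) : ℂ))
    (fun u _ => (hd u).sub_const _)
    (fun u hu => (Real.hasDerivAt_rpow_const (Or.inl (ne_of_gt hu))).ofReal_comp)
    (by
      refine (hI1.const_mul (-(α:ℂ))).congr (Filter.Eventually.of_forall fun u => ?_)
      simp only [Pi.mul_apply]; push_cast; ring)
    hI2
    (by
      have hz : Filter.Tendsto (fun u : ℝ => C * u ^ (1 - α)) (nhdsWithin 0 (Set.Ioi 0)) (nhds 0) := by
        have := (Real.continuousAt_rpow_const 0 (1 - α) (Or.inr (by linarith))).tendsto.const_mul C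
        rw [Real.zero_rpow (by linarith), mul_zero] at this
        exact this.mono_left nhdsWithin_le_nhds
      refine squeeze_zero_norm' ?_ hz
      filter_upwards [self_mem_nhdsWithin] with u hu
      have hu : 0 < u := hu
      have hp : 0 ≤ u ^ (-α) := by positivity
      rw [Pi.mul_apply, norm_mul, Complex.norm_real, Real.norm_of_nonneg hp]
      rw [sub_eq_add_neg 1 α, Real.rpow_add hu, Real.rpow_one, ← mul_assoc]
      exact mul_le_mul_of_nonneg_right (lip u hu) hp)
    (by
      have hz : Filter.Tendsto (fun u : ℝ => 2 * D * u ^ (-α)) Filter.atTop (nhds 0) := by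
        simpa using (tendsto_rpow_neg_atTop hα).const_mul (2 * D)
      refine squeeze_zero_norm' ?_ hz
      filter_upwards [Filter.eventually_gt_atTop 0] with u hu
      have hp : 0 ≤ u ^ (-α) := by positivity
      rw [Pi.mul_apply, norm_mul, Complex.norm_real, Real.norm_of_nonneg hp]
      exact mul_le_mul_of_nonneg_right (bd u) hp)
  have e : ∫ u in Set.Ioi (0:ℝ), (g u - g 0) * ((-α * u ^ (-α - 1) : ℝ) : ℂ) =
    -(α:ℂ) * ∫ u in Set.Ioi (0:ℝ), (g u - g 0) * ((u ^ (-α - 1) : ℝ) : ℂ) := by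
    rw [← integral_const_mul]; congr 1; ext u; push_cast; ring
  rw [e] at key
  linear_combination -key

lemma fub (α : ℝ) (hα : 0 < α) (hα1 : α < 1) (G : ℝ → ℂ) (hG : Continuous G)
    (hGi : Integrable (fun ξ : ℝ => (1 + |ξ|) * ‖G ξ‖)) (hGi0 : Integrable G) (x s : ℝ)
    (hs : |s| = 1) :
    ∫ ξ : ℝ, G ξ * Complex.exp (Complex.I * ξ * x) * Kst α (s * ξ) =
    ∫ u in Set.Ioi (0:ℝ), ((∫ ξ : ℝ, G ξ * Complex.exp (Complex.I * ξ * ((x + s * u : ℝ) : ℂ))) -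
      ∫ ξ : ℝ, G ξ * Complex.exp (Complex.I * ξ * x)) * ((u ^ (-α - 1) : ℝ) : ℂ) := by
  have hn : ∀ y ξ : ℝ, ‖Complex.exp (Complex.I * ξ * y)‖ = 1 := by
    intro y ξ
    rw [show Complex.I * ξ * y = Complex.I * ((ξ * y : ℝ) : ℂ) by push_cast; ring,
      Complex.norm_exp_I_mul_ofReal]
  have hint : ∀ y : ℝ, Integrable (fun ξ : ℝ => G ξ * Complex.exp (Complex.I * ξ * y)) := by
    intro y
    refine hGi0.norm.mono' (by fun_prop) (Filter.Eventually.of_forall fun ξ => ?_)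
    rw [norm_mul, hn, mul_one]
  let H : ℝ → ℝ → ℂ := fun ξ u => G ξ * Complex.exp (Complex.I * ξ * x) *
    ((Complex.exp (Complex.I * ((s * ξ : ℝ) : ℂ) * u) - 1) * ((u ^ (-α - 1) : ℝ) : ℂ))
  have hH : Integrable (Function.uncurry H) (volume.prod (volume.restrict (Set.Ioi 0))) := by
    refine Integrable.mono' (Integrable.mul_prod hGi (wst_int α hα hα1)) ?_ ?_
    · refine Measurable.aestronglyMeasurable ?_
      simp only [H, Function.uncurry_def]
      have := hG.measurable
      fun_prop
    · have hmem : ∀ᵐ z : ℝ × ℝ ∂(volume.prod (volume.restrict (Set.Ioi 0))), 0 < z.2 :=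
        Measure.quasiMeasurePreserving_snd.ae (ae_restrict_mem measurableSet_Ioi)
      filter_upwards [hmem] with z hz
      have := kern_bound α (s * z.1) z.2 hz
      rw [abs_mul, hs, one_mul] at this
      simp only [H, Function.uncurry_def]
      rw [norm_mul, norm_mul, hn, mul_one]
      calc _ ≤ ‖G z.1‖ * ((1 + |z.1|) * wst α z.2) := by gcongr
        _ = _ := by ring
  have sw := integral_integral_swap hH
  have l : ∫ ξ : ℝ, G ξ * Complex.exp (Complex.I * ξ * x) * Kst α (s * ξ) =
      ∫ ξ, ∫ u in Set.Ioi (0:ℝ), H ξ u := by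
    congr 1; ext ξ; simp only [H]; rw [integral_const_mul]; rfl
  rw [l, sw]
  congr 1; ext u
  rw [← integral_sub (hint _) (hint _), ← integral_mul_const]
  congr 1; ext ξ
  simp only [H]
  rw [show Complex.I * (ξ:ℂ) * ((x + s * u : ℝ) : ℂ) = Complex.I * ξ * x +
    Complex.I * ((s * ξ : ℝ) : ℂ) * u by push_cast; ring, Complex.exp_add]
  ring

open scoped FourierTransform in
lemma fourierT_eq (f : ℝ → ℂ) (ξ : ℝ) : fourierT f ξ = 𝓕 f (ξ / (2 * Real.pi)) := by
  rw [Real.fourier_real_eq_integral_exp_smul]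
  unfold fourierT
  congr 1; ext v
  rw [smul_eq_mul, mul_comm]
  congr 2
  have : (Real.pi : ℂ) ≠ 0 := by exact_mod_cast Real.pi_ne_zero
  push_cast; field_simp

open scoped FourierTransform in
lemma inversion (f : SchwartzMap ℝ ℂ) (y : ℝ) :
    f y = ((1 / (2 * Real.pi) : ℝ) : ℂ) *
      ∫ ξ : ℝ, fourierT f ξ * Complex.exp (Complex.I * ξ * y) := by
  have h : 𝓕⁻ (𝓕 f) y = f y := by rw [FourierTransform.fourierInv_fourier_eq]
  have pp : 0 < 2 * Real.pi := by positivity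
  rw [← h, SchwartzMap.fourierInv_coe, Real.fourierInv_eq', SchwartzMap.fourier_coe]
  have := Measure.integral_comp_div (fun η : ℝ => Complex.exp (((2 * Real.pi * inner ℝ η y : ℝ) : ℂ)
    * Complex.I) • 𝓕 (⇑f) η) (2 * Real.pi)
  rw [abs_of_pos pp] at this
  have e : ∫ ξ : ℝ, fourierT f ξ * Complex.exp (Complex.I * ξ * y) =
    ∫ ξ : ℝ, Complex.exp (((2 * Real.pi * inner ℝ (ξ / (2 * Real.pi)) y : ℝ) : ℂ)
    * Complex.I) • 𝓕 (⇑f) (ξ / (2 * Real.pi)) := by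
    congr 1; ext ξ
    rw [fourierT_eq, smul_eq_mul, mul_comm]
    congr 2
    have : (Real.pi : ℂ) ≠ 0 := by exact_mod_cast Real.pi_ne_zero
    simp only [RCLike.inner_apply, conj_trivial]
    push_cast; field_simp
  rw [e, this, Complex.real_smul, ← mul_assoc, ← Complex.ofReal_mul]
  rw [one_div, inv_mul_cancel₀ pp.ne', Complex.ofReal_one, one_mul]

open scoped FourierTransform in
lemma inversion_deriv (f : SchwartzMap ℝ ℂ) (y : ℝ) :
    deriv f y = ((1 / (2 * Real.pi) : ℝ) : ℂ) *
      ∫ ξ : ℝ, fourierT f ξ * (Complex.I * ξ) * Complex.exp (Complex.I * ξ * y) := by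
  have h := inversion (SchwartzMap.derivCLM ℂ ℂ f) y
  have hc : ⇑(SchwartzMap.derivCLM ℂ ℂ f) = deriv ⇑f := by
    ext z; exact SchwartzMap.derivCLM_apply ℂ f z
  have hi : Integrable (deriv ⇑f) := by rw [← hc]; exact SchwartzMap.integrable _
  rw [hc] at h
  rw [h]
  congr 2; ext ξ
  congr 1
  rw [fourierT_eq, fourierT_eq, Real.fourier_deriv f.integrable f.differentiable hi]
  have : (Real.pi : ℂ) ≠ 0 := by exact_mod_cast Real.pi_ne_zero
  simp only [smul_eq_mul]
  push_cast; field_simp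

open scoped FourierTransform in
lemma fourierT_facts (f : SchwartzMap ℝ ℂ) : Continuous (fourierT f) ∧ Integrable (fourierT f) ∧
    Integrable (fun ξ : ℝ => (1 + |ξ|) * ‖fourierT f ξ‖) := by
  have pp : 2 * Real.pi ≠ 0 := by positivity
  have e : fourierT f = fun ξ => (𝓕 f : SchwartzMap ℝ ℂ) (ξ / (2 * Real.pi)) := by
    ext ξ; rw [fourierT_eq, SchwartzMap.fourier_coe]
  have i1 : Integrable (fourierT f) := by
    rw [e]; exact (SchwartzMap.integrable _).comp_div pp
  refine ⟨?_, i1, ?_⟩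
  · rw [e]; exact (SchwartzMap.continuous _).comp (by fun_prop)
  · have i2 := (((𝓕 f : SchwartzMap ℝ ℂ).integrable_pow_mul volume 1).comp_div pp).const_mul
      (2 * Real.pi)
    refine (i1.norm.add i2).congr (Filter.Eventually.of_forall fun ξ => ?_)
    simp only [Pi.add_apply, e, pow_one, norm_div, Real.norm_eq_abs]
    rw [abs_of_pos (by positivity : 0 < 2 * Real.pi)]
    field_simp

lemma norm_exp_sub_exp_le_of_re (z w : ℂ) (hz : z.re ≤ 0) (hw : w.re ≤ 0) :
    ‖Complex.exp z - Complex.exp w‖ ≤ ‖z - w‖ := by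
  have := Convex.norm_image_sub_le_of_norm_hasDerivWithin_le (f := Complex.exp)
    (f' := Complex.exp) (C := 1)
    (s := {z : ℂ | z.re ≤ 0}) (x := w) (y := z)
    (fun x _ => (Complex.hasDerivAt_exp x).hasDerivWithinAt)
    (fun x hx => by rw [Complex.norm_exp]; exact Real.exp_le_one_iff.mpr hx)
    (convex_halfSpace_re_le 0) hw hz
  simpa using this

noncomputable def Lst (α m₁ m₂ ξ : ℝ) : ℂ := m₁ * Kst α ξ + m₂ * Kst α (-ξ)

noncomputable def Zst (α m₁ m₂ β x t ξ : ℝ) : ℂ :=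
  Complex.I * ξ * x * ((Real.exp (-t) : ℝ) : ℂ) +
    Complex.I * ξ * (Gamma01 α m₁ m₂ β) * ((1 - Real.exp (-t) : ℝ) : ℂ) +
    ((1 - Real.exp (-(α * t)) : ℝ) : ℂ) * Lst α m₁ m₂ ξ

lemma integrand_eq (α m₁ m₂ β x t ξ : ℝ) (hα : 0 < α) (hα1 : α < 1) (hm₁ : 0 ≤ m₁)
    (hm₂ : 0 ≤ m₂) (c : ℂ) :
    c * Complex.exp (Complex.I * ξ * x * ((Real.exp (-t) : ℝ) : ℂ)) *
      psi01 α m₁ m₂ β ξ / psi01 α m₁ m₂ β (Real.exp (-t) * ξ) =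
    c * Complex.exp (Zst α m₁ m₂ β x t ξ) := by
  unfold psi01
  rw [nu_integral α m₁ m₂ _ hα hα1 hm₁ hm₂, nu_integral α m₁ m₂ _ hα hα1 hm₁ hm₂,
    mul_div_assoc, ← Complex.exp_sub, mul_assoc, ← Complex.exp_add, ← mul_neg,
    Kst_scale α _ _ (Real.exp_pos _), Kst_scale α _ _ (Real.exp_pos _), ← Real.exp_mul]
  congr 2
  unfold Zst Lst
  rw [show -t * α = -(α * t) by ring]
  push_cast
  ring

lemma Lst_re (α m₁ m₂ ξ : ℝ) (hα : 0 < α) (hα1 : α < 1) (hm₁ : 0 ≤ m₁)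
    (hm₂ : 0 ≤ m₂) : (Lst α m₁ m₂ ξ).re ≤ 0 := by
  unfold Lst
  rw [Complex.add_re, Complex.re_ofReal_mul, Complex.re_ofReal_mul]
  nlinarith [Kst_re α ξ hα hα1, Kst_re α (-ξ) hα hα1]

lemma Zst_re (α m₁ m₂ β x t ξ : ℝ) (hα : 0 < α) (hα1 : α < 1) (hm₁ : 0 ≤ m₁)
    (hm₂ : 0 ≤ m₂) (ht : 0 ≤ t) : (Zst α m₁ m₂ β x t ξ).re ≤ 0 := by
  have h : Zst α m₁ m₂ β x t ξ = ((ξ * x * Real.exp (-t) + ξ * Gamma01 α m₁ m₂ β *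
      (1 - Real.exp (-t)) : ℝ) : ℂ) * Complex.I +
      ((1 - Real.exp (-(α * t)) : ℝ) : ℂ) * Lst α m₁ m₂ ξ := by
    unfold Zst; push_cast; ring
  rw [h, Complex.add_re, Complex.re_ofReal_mul, Complex.re_ofReal_mul, Complex.I_re]
  have h1 : Real.exp (-(α * t)) ≤ 1 := Real.exp_le_one_iff.mpr (by nlinarith)
  nlinarith [Lst_re α m₁ m₂ ξ hα hα1 hm₁ hm₂]

lemma Zst_deriv (α m₁ m₂ β x ξ : ℝ) : HasDerivAt (fun t => Zst α m₁ m₂ β x t ξ)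
    (-(Complex.I * ξ * x) + Complex.I * ξ * (Gamma01 α m₁ m₂ β) + α * Lst α m₁ m₂ ξ) 0 := by
  have h1 : HasDerivAt (fun t : ℝ => Real.exp (-t)) (-1) 0 := by
    simpa using (hasDerivAt_neg (0:ℝ)).exp
  have h2 : HasDerivAt (fun t : ℝ => Real.exp (-(α * t))) (-α) 0 := by
    simpa using (((hasDerivAt_id (0:ℝ)).const_mul α).neg).exp
  have := ((h1.ofReal_comp.const_mul (Complex.I * ξ * x)).add
    ((h1.const_sub 1).ofReal_comp.const_mul (Complex.I * ξ * (Gamma01 α m₁ m₂ β)))).add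
    ((h2.const_sub 1).ofReal_comp.mul_const (Lst α m₁ m₂ ξ))
  refine this.congr_deriv ?_
  push_cast; ring

lemma Zst_zero (α m₁ m₂ β x ξ : ℝ) : Zst α m₁ m₂ β x 0 ξ = Complex.I * ξ * x := by
  simp [Zst]

lemma Lst_bound (α m₁ m₂ ξ : ℝ) (hα : 0 < α) (hα1 : α < 1) (hm₁ : 0 ≤ m₁) (hm₂ : 0 ≤ m₂) :
    ‖Lst α m₁ m₂ ξ‖ ≤ (1 + |ξ|) * ((m₁ + m₂) * ∫ u in Set.Ioi (0:ℝ), wst α u) := by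
  have a := Kst_bound α ξ hα hα1
  have b := Kst_bound α (-ξ) hα hα1
  rw [abs_neg] at b
  unfold Lst
  refine (norm_add_le _ _).trans ?_
  rw [norm_mul, norm_mul, Complex.norm_real, Complex.norm_real, Real.norm_of_nonneg hm₁,
    Real.norm_of_nonneg hm₂]
  nlinarith [mul_le_mul_of_nonneg_left a hm₁, mul_le_mul_of_nonneg_left b hm₂]

lemma Zst_bound (α m₁ m₂ β x t ξ : ℝ) (hα : 0 < α) (hα1 : α < 1) (hm₁ : 0 ≤ m₁)
    (hm₂ : 0 ≤ m₂) (ht : 0 ≤ t) : ‖Zst α m₁ m₂ β x t ξ - Zst α m₁ m₂ β x 0 ξ‖ ≤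
    t * ((1 + |ξ|) * (|x| + |Gamma01 α m₁ m₂ β| +
      (m₁ + m₂) * ∫ u in Set.Ioi (0:ℝ), wst α u)) := by
  have e : Zst α m₁ m₂ β x t ξ - Zst α m₁ m₂ β x 0 ξ =
      Complex.I * ((ξ * (Gamma01 α m₁ m₂ β - x) * (1 - Real.exp (-t)) : ℝ) : ℂ) +
      ((1 - Real.exp (-(α * t)) : ℝ) : ℂ) * Lst α m₁ m₂ ξ := by
    rw [Zst_zero]; unfold Zst; push_cast; ring
  have h1 : Real.exp (-t) ≤ 1 := Real.exp_le_one_iff.mpr (by linarith)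
  have h2 : Real.exp (-(α * t)) ≤ 1 := Real.exp_le_one_iff.mpr (by nlinarith)
  have h3 : 1 - Real.exp (-t) ≤ t := by linarith [Real.add_one_le_exp (-t)]
  have h4 : 1 - Real.exp (-(α * t)) ≤ t := by nlinarith [Real.add_one_le_exp (-(α * t))]
  have h5 := Lst_bound α m₁ m₂ ξ hα hα1 hm₁ hm₂
  have h6 : |Gamma01 α m₁ m₂ β - x| ≤ |x| + |Gamma01 α m₁ m₂ β| := by
    linarith [abs_sub (Gamma01 α m₁ m₂ β) x]
  rw [e]
  refine (norm_add_le _ _).trans ?_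
  rw [norm_mul, norm_mul, Complex.norm_I, one_mul, Complex.norm_real, Complex.norm_real,
    Real.norm_eq_abs, abs_mul, abs_mul, abs_of_nonneg (sub_nonneg.mpr h1),
    Real.norm_of_nonneg (sub_nonneg.mpr h2)]
  have s1 : |ξ| * |Gamma01 α m₁ m₂ β - x| * (1 - Real.exp (-t)) ≤
      (1 + |ξ|) * (|x| + |Gamma01 α m₁ m₂ β|) * t := by
    have : (0:ℝ) ≤ 1 - Real.exp (-t) := sub_nonneg.mpr h1
    have : |ξ| ≤ 1 + |ξ| := by linarith
    gcongr
  have s2 := mul_le_mul h4 h5 (norm_nonneg _) ht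
  linarith

lemma Zst_meas (α m₁ m₂ β x t : ℝ) : Measurable (fun ξ => Zst α m₁ m₂ β x t ξ) := by
  have := Kst_meas α
  unfold Zst Lst
  fun_prop

lemma main_tendsto (α m₁ m₂ β : ℝ) (hα : 0 < α) (hα1 : α < 1)
    (hm₁ : 0 ≤ m₁) (hm₂ : 0 ≤ m₂) (f : SchwartzMap ℝ ℂ) (x : ℝ) :
    Filter.Tendsto (fun t : ℝ => (Pt α m₁ m₂ β t (⇑f) x - f x) / (t : ℂ))
      (nhdsWithin 0 (Set.Ioi 0))
      (nhds (((1 / (2 * Real.pi) : ℝ) : ℂ) * ∫ ξ : ℝ, fourierT f ξ *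
        (Complex.exp (Complex.I * ξ * x) * (-(Complex.I * ξ * x) +
          Complex.I * ξ * (Gamma01 α m₁ m₂ β) + α * Lst α m₁ m₂ ξ)))) := by
  obtain ⟨hGc, hGi0, hGi⟩ := fourierT_facts f
  set G := fourierT f with hGdef
  have hGm : Measurable G := hGc.measurable
  have hint : ∀ t : ℝ, 0 ≤ t →
      Integrable (fun ξ => G ξ * Complex.exp (Zst α m₁ m₂ β x t ξ)) := by
    intro t ht
    have := Zst_meas α m₁ m₂ β x t
    refine hGi0.norm.mono' (Measurable.aestronglyMeasurable (by fun_prop))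
      (Filter.Eventually.of_forall fun ξ => ?_)
    rw [norm_mul, Complex.norm_exp]
    exact mul_le_of_le_one_right (norm_nonneg _)
      (Real.exp_le_one_iff.mpr (Zst_re α m₁ m₂ β x t ξ hα hα1 hm₁ hm₂ ht))
  have hD : Filter.Tendsto (fun t : ℝ => ∫ ξ : ℝ, G ξ *
      ((Complex.exp (Zst α m₁ m₂ β x t ξ) - Complex.exp (Zst α m₁ m₂ β x 0 ξ)) / (t : ℂ)))
      (nhdsWithin 0 (Set.Ioi 0)) (nhds (∫ ξ : ℝ, G ξ *
        (Complex.exp (Complex.I * ξ * x) * (-(Complex.I * ξ * x) +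
          Complex.I * ξ * (Gamma01 α m₁ m₂ β) + α * Lst α m₁ m₂ ξ)))) := by
    refine tendsto_integral_filter_of_dominated_convergence
      (fun ξ => (|x| + |Gamma01 α m₁ m₂ β| + (m₁ + m₂) * ∫ u in Set.Ioi (0:ℝ), wst α u) *
        ((1 + |ξ|) * ‖G ξ‖)) ?_ ?_ (hGi.const_mul _) ?_
    · refine Filter.Eventually.of_forall fun t => ?_
      have := Zst_meas α m₁ m₂ β x t
      have := Zst_meas α m₁ m₂ β x 0
      exact Measurable.aestronglyMeasurable (by fun_prop)
    · filter_upwards [self_mem_nhdsWithin] with t ht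
      have ht : 0 < t := ht
      refine Filter.Eventually.of_forall fun ξ => ?_
      rw [norm_mul, norm_div, Complex.norm_real, Real.norm_of_nonneg ht.le]
      have h1 := (norm_exp_sub_exp_le_of_re _ _
        (Zst_re α m₁ m₂ β x t ξ hα hα1 hm₁ hm₂ ht.le)
        (Zst_re α m₁ m₂ β x 0 ξ hα hα1 hm₁ hm₂ le_rfl)).trans
        (Zst_bound α m₁ m₂ β x t ξ hα hα1 hm₁ hm₂ ht.le)
      have h2 : ‖Complex.exp (Zst α m₁ m₂ β x t ξ) - Complex.exp (Zst α m₁ m₂ β x 0 ξ)‖ / t ≤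
        (1 + |ξ|) * (|x| + |Gamma01 α m₁ m₂ β| +
          (m₁ + m₂) * ∫ u in Set.Ioi (0:ℝ), wst α u) := by
        rw [div_le_iff₀ ht]; linarith
      have := mul_le_mul_of_nonneg_left h2 (norm_nonneg (G ξ))
      linarith
    · refine Filter.Eventually.of_forall fun ξ => ?_
      refine Filter.Tendsto.const_mul _ ?_
      have h := (Zst_deriv α m₁ m₂ β x ξ).cexp
      rw [hasDerivAt_iff_tendsto_slope, Zst_zero] at h
      refine (h.mono_left (nhdsWithin_mono 0 fun t (ht : 0 < t) => ht.ne')).congr fun t => ?_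
      rw [slope_def_module, sub_zero, Complex.real_smul]
      push_cast; ring
  refine (hD.const_mul (((1 / (2 * Real.pi) : ℝ) : ℂ))).congr' ?_
  filter_upwards [self_mem_nhdsWithin] with t ht
  have ht : 0 < t := ht
  rw [inversion f x]
  unfold Pt
  simp_rw [integrand_eq α m₁ m₂ β x t _ hα hα1 hm₁ hm₂, ← Zst_zero α m₁ m₂ β x]
  rw [← mul_sub, ← integral_sub (hint t ht.le) (hint 0 le_rfl), mul_div_assoc, ← integral_div]
  congr 2; ext ξ
  ring

theorem stmt_12 (α m₁ m₂ β : ℝ) (hα : 0 < α) (hα1 : α < 1)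
    (hm₁ : 0 ≤ m₁) (hm₂ : 0 ≤ m₂) (hm : 0 < m₁ + m₂)
    (f : SchwartzMap ℝ ℂ) (x : ℝ) :
    IntegrableOn (fun u : ℝ => deriv (⇑f) (x + u) * ((u ^ (-α) : ℝ) : ℂ)) (Set.Ioi 0) ∧
    IntegrableOn (fun u : ℝ => deriv (⇑f) (x - u) * ((u ^ (-α) : ℝ) : ℂ)) (Set.Ioi 0) ∧
    Filter.Tendsto (fun t : ℝ => (Pt α m₁ m₂ β t (⇑f) x - f x) / (t : ℂ))
      (nhdsWithin 0 (Set.Ioi 0))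
      (nhds (-(x : ℂ) * deriv (⇑f) x + ((Gamma01 α m₁ m₂ β : ℝ) : ℂ) * deriv (⇑f) x +
        (m₁ : ℂ) * (∫ u in Set.Ioi (0 : ℝ), deriv (⇑f) (x + u) * ((u ^ (-α) : ℝ) : ℂ)) -
        (m₂ : ℂ) * ∫ u in Set.Ioi (0 : ℝ), deriv (⇑f) (x - u) * ((u ^ (-α) : ℝ) : ℂ))) := by
  have hc : ⇑(SchwartzMap.derivCLM ℂ ℂ f) = deriv ⇑f := by
    ext z; exact SchwartzMap.derivCLM_apply ℂ f z
  have hi : Integrable (deriv ⇑f) := by rw [← hc]; exact SchwartzMap.integrable _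
  have hcont : Continuous (deriv ⇑f) := by rw [← hc]; exact SchwartzMap.continuous _
  obtain ⟨C, hC⟩ : ∃ C, ∀ u, ‖deriv (⇑f) u‖ ≤ C := by
    rw [← hc]
    exact ⟨_, fun u => SchwartzMap.norm_le_seminorm ℝ (SchwartzMap.derivCLM ℂ ℂ f) u⟩
  obtain ⟨D, hD⟩ : ∃ D, ∀ u, ‖f u‖ ≤ D := ⟨_, fun u => SchwartzMap.norm_le_seminorm ℝ f u⟩
  have hip : Integrable (fun u => deriv (⇑f) (x + u)) := hi.comp_add_left x
  have hin : Integrable (fun u => deriv (⇑f) (x - u)) := hi.comp_sub_left x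
  refine ⟨rpow_mul_int α hα hα1 _ (by fun_prop) C (fun u => hC _) hip,
    rpow_mul_int α hα hα1 _ (by fun_prop) C (fun u => hC _) hin, ?_⟩
  have hdf : ∀ y, HasDerivAt (⇑f) (deriv (⇑f) y) y := fun y => f.differentiable.differentiableAt.hasDerivAt
  have ibp1 := ibp α hα hα1 (fun u => f (x + u)) (fun u => deriv (⇑f) (x + u))
    (fun u => (hdf (x + u)).comp_const_add x u)
    (by fun_prop) C D (fun u => hC _) (fun u => hD _) hip
  have ibp2 := ibp α hα hα1 (fun u => f (x - u)) (fun u => -deriv (⇑f) (x - u))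
    (fun u => (hdf (x - u)).comp_const_sub x u)
    (by fun_prop) C D (fun u => by rw [norm_neg]; exact hC _) (fun u => hD _) hin.neg
  simp only [add_zero, sub_zero, neg_mul, integral_neg] at ibp1 ibp2
  obtain ⟨hGc, hGi0, hGi⟩ := fourierT_facts f
  have hGm : Measurable (fourierT f) := hGc.measurable
  have hfub : ∀ s : ℝ, |s| = 1 → ((1 / (2 * Real.pi) : ℝ) : ℂ) *
      ∫ ξ : ℝ, fourierT f ξ * Complex.exp (Complex.I * ξ * x) * Kst α (s * ξ) =
      ∫ u in Set.Ioi (0:ℝ), (f (x + s * u) - f x) * ((u ^ (-α - 1) : ℝ) : ℂ) := by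
    intro s hs
    rw [fub α hα hα1 _ hGc hGi hGi0 x s hs, ← integral_const_mul]
    congr 1; ext u
    rw [inversion f (x + s * u), inversion f x]; ring
  have f1 := hfub 1 (by simp)
  have f2 := hfub (-1) (by simp)
  simp only [one_mul, neg_mul, ← sub_eq_add_neg] at f1 f2
  have hn : ∀ y ξ : ℝ, ‖Complex.exp (Complex.I * ξ * y)‖ = 1 := by
    intro y ξ
    rw [show Complex.I * ξ * y = Complex.I * ((ξ * y : ℝ) : ℂ) by push_cast; ring,
      Complex.norm_exp_I_mul_ofReal]
  have J0 : Integrable (fun ξ : ℝ => fourierT f ξ * (Complex.I * ξ) *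
      Complex.exp (Complex.I * ξ * x)) := by
    refine hGi.mono' (by fun_prop) (Filter.Eventually.of_forall fun ξ => ?_)
    rw [norm_mul, norm_mul, hn, norm_mul, Complex.norm_I, Complex.norm_real, Real.norm_eq_abs]
    nlinarith [norm_nonneg (fourierT f ξ)]
  have JK : ∀ s : ℝ, |s| = 1 → Integrable (fun ξ : ℝ => fourierT f ξ *
      Complex.exp (Complex.I * ξ * x) * Kst α (s * ξ)) := by
    intro s hs
    have := Kst_meas α
    refine (hGi.const_mul (∫ u in Set.Ioi (0:ℝ), wst α u)).mono'
      (Measurable.aestronglyMeasurable (by fun_prop)) (Filter.Eventually.of_forall fun ξ => ?_)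
    have hb := Kst_bound α (s * ξ) hα hα1
    rw [abs_mul, hs, one_mul] at hb
    rw [norm_mul, norm_mul, hn, mul_one]
    nlinarith [mul_le_mul_of_nonneg_left hb (norm_nonneg (fourierT f ξ))]
  have J1 := JK 1 (by simp)
  have J2 := JK (-1) (by simp)
  simp only [one_mul, neg_mul] at J1 J2
  have lim := main_tendsto α m₁ m₂ β hα hα1 hm₁ hm₂ f x
  have e : ∫ ξ : ℝ, fourierT f ξ *
        (Complex.exp (Complex.I * ξ * x) * (-(Complex.I * ξ * x) +
          Complex.I * ξ * (Gamma01 α m₁ m₂ β) + α * Lst α m₁ m₂ ξ)) =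
      ((Gamma01 α m₁ m₂ β : ℂ) - x) * (∫ ξ : ℝ, fourierT f ξ * (Complex.I * ξ) *
        Complex.exp (Complex.I * ξ * x)) +
      ((α * m₁ : ℂ) * (∫ ξ : ℝ, fourierT f ξ * Complex.exp (Complex.I * ξ * x) * Kst α ξ) +
      (α * m₂ : ℂ) * ∫ ξ : ℝ, fourierT f ξ * Complex.exp (Complex.I * ξ * x) * Kst α (-ξ)) := by
    have J12 : Integrable (fun ξ : ℝ =>
        (α * m₁ : ℂ) * (fourierT f ξ * Complex.exp (Complex.I * ξ * x) * Kst α ξ) +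
        (α * m₂ : ℂ) * (fourierT f ξ * Complex.exp (Complex.I * ξ * x) * Kst α (-ξ))) :=
      (J1.const_mul _).add (J2.const_mul _)
    rw [← integral_const_mul, ← integral_const_mul, ← integral_const_mul,
      ← integral_add (J1.const_mul _) (J2.const_mul _),
      ← integral_add (J0.const_mul _) J12]
    congr 1; ext ξ
    unfold Lst; ring
  rw [e] at lim
  convert lim using 2
  have d := inversion_deriv f x
  linear_combination ((Gamma01 α m₁ m₂ β : ℂ) - x) * d - (α * m₁ : ℂ) * f1 - (α * m₂ : ℂ) * f2
    - (m₁ : ℂ) * ibp1 - (m₂ : ℂ) * ibp2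
end

section
/- (Gradient bound for the Stein solution, α ∈ (0,1).) Let α ∈ (0,1), m₁, m₂ ∈ [0,∞) with m₁ + m₂ > 0, β ∈ ℝ. Let μ be a Borel probability measure on ℝ with characteristic function ψ_α, and for each t > 0 let μ_t be a Borel probability measure on ℝ with characteristic function ξ ↦ ψ_α(ξ)/ψ_α(e^{-t}ξ). Let h : ℝ → ℝ be differentiable with ‖h'‖_∞ := sup_x |h'(x)| < ∞ and satisfying |h(x) - h(y)| ≤ min(|x-y|, |x-y|^δ) for all x, y and some δ ∈ (0,α). Assume h is μ-integrable and that for every x ∈ ℝ the function t ↦ ∫_ℝ h(y + e^{-t}x) dμ_t(y) - ∫_ℝ h dμ is Lebesgue integrable on (0,∞), and set f_h(x) = -∫₀^∞ (∫_ℝ h(y + e^{-t}x) dμ_t(y) - ∫_ℝ h dμ) dt. Then f_h is differentiable on ℝ and sup_x |f_h'(x)| ≤ ‖h'‖_∞. -/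
open MeasureTheory

theorem inner_deriv (ρ : Measure ℝ) [IsProbabilityMeasure ρ] (h : ℝ → ℝ)
    (hdiff : Differentiable ℝ h) (hL : ∀ x y : ℝ, |h x - h y| ≤ |x - y|)
    (M : ℝ) (hM : ∀ y, |deriv h y| ≤ M) (a : ℝ) (ha : 0 < a) (c x : ℝ) :
    DifferentiableAt ℝ (fun x => (∫ y : ℝ, h (y + a * x) ∂ρ) - c) x ∧
    |deriv (fun x => (∫ y : ℝ, h (y + a * x) ∂ρ) - c) x| ≤ M * a := by
  have hM0 : 0 ≤ M := (abs_nonneg _).trans (hM 0)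
  have hmeas : ∀ z : ℝ, AEStronglyMeasurable (fun y => h (y + a * z)) ρ := fun z =>
    (hdiff.continuous.comp (by fun_prop : Continuous fun y : ℝ => y + a * z)).aestronglyMeasurable
  have htr : ∀ z w : ℝ, Integrable (fun y => h (y + a * z)) ρ →
      Integrable (fun y => h (y + a * w)) ρ := by
    intro z w hz
    have hd : Integrable (fun y => h (y + a * w) - h (y + a * z)) ρ := by
      refine Integrable.mono' (integrable_const |a * w - a * z|) ((hmeas w).sub (hmeas z)) ?_
      refine Filter.Eventually.of_forall fun y => ?_
      refine (hL _ _).trans (le_of_eq ?_)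
      congr 1
      ring
    refine (hd.add hz).congr (Filter.Eventually.of_forall fun y => ?_)
    simp
  by_cases hi : Integrable (fun y => h (y + a * x)) ρ
  · have key := hasDerivAt_integral_of_dominated_loc_of_deriv_le (μ := ρ) (𝕜 := ℝ)
      (F := fun z y => h (y + a * z)) (F' := fun z y => deriv h (y + a * z) * a)
      (x₀ := x) (s := Set.univ) (bound := fun _ => M * a) Filter.univ_mem
      (Filter.Eventually.of_forall hmeas) hi
      (((measurable_deriv h).comp (by fun_prop : Measurable fun y : ℝ => y + a * x)).mul_const
        a).aestronglyMeasurable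
      (Filter.Eventually.of_forall fun y z _ => by
        rw [Real.norm_eq_abs, abs_mul, abs_of_pos ha]
        exact mul_le_mul_of_nonneg_right (hM _) ha.le)
      (integrable_const _)
      (Filter.Eventually.of_forall fun y z _ => by
        have h1 : HasDerivAt (fun z : ℝ => y + a * z) a z := by
          simpa using ((hasDerivAt_id z).const_mul a).const_add y
        exact (hdiff _).hasDerivAt.comp z h1)
    have k2 := key.2.sub_const c
    refine ⟨k2.differentiableAt, ?_⟩
    rw [k2.deriv]
    have := norm_integral_le_of_norm_le (μ := ρ) (integrable_const (M * a))
      (f := fun y => deriv h (y + a * x) * a)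
      (Filter.Eventually.of_forall fun y => by
        rw [Real.norm_eq_abs, abs_mul, abs_of_pos ha]
        exact mul_le_mul_of_nonneg_right (hM _) ha.le)
    simpa using this
  · have hc : (fun x => (∫ y : ℝ, h (y + a * x) ∂ρ) - c) = fun _ => 0 - c := by
      funext z
      rw [integral_undef fun hz => hi (htr z x hz)]
    rw [hc]
    refine ⟨differentiableAt_const _, ?_⟩
    simp only [deriv_const, abs_zero]
    positivity

theorem stmt_14 (α m₁ m₂ β δ : ℝ) (hα : 0 < α) (hα1 : α < 1)
    (hm₁ : 0 ≤ m₁) (hm₂ : 0 ≤ m₂) (hm : 0 < m₁ + m₂)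
    (hδ : 0 < δ) (hδα : δ < α)
    (μ : Measure ℝ) [IsProbabilityMeasure μ]
    (hμ : ∀ t : ℝ, ∫ x : ℝ, Complex.exp (Complex.I * t * x) ∂μ = psi01 α m₁ m₂ β t)
    (μt : ℝ → Measure ℝ) (hP : ∀ t : ℝ, 0 < t → IsProbabilityMeasure (μt t))
    (hμt : ∀ t : ℝ, 0 < t → ∀ ξ : ℝ,
      ∫ x : ℝ, Complex.exp (Complex.I * ξ * x) ∂(μt t) =
        psi01 α m₁ m₂ β ξ / psi01 α m₁ m₂ β (Real.exp (-t) * ξ))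
    (h : ℝ → ℝ) (hdiff : Differentiable ℝ h)
    (hbdd : BddAbove (Set.range fun x => |deriv h x|))
    (hLip : ∀ x y : ℝ, |h x - h y| ≤ min |x - y| (|x - y| ^ δ))
    (hint : Integrable h μ)
    (hint2 : ∀ x : ℝ, IntegrableOn
      (fun t : ℝ => (∫ y : ℝ, h (y + Real.exp (-t) * x) ∂(μt t)) - ∫ y : ℝ, h y ∂μ)
      (Set.Ioi 0)) :
    Differentiable ℝ (fun x : ℝ => -∫ t in Set.Ioi (0 : ℝ),
        ((∫ y : ℝ, h (y + Real.exp (-t) * x) ∂(μt t)) - ∫ y : ℝ, h y ∂μ)) ∧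
    ∀ x : ℝ, |deriv (fun x : ℝ => -∫ t in Set.Ioi (0 : ℝ),
        ((∫ y : ℝ, h (y + Real.exp (-t) * x) ∂(μt t)) - ∫ y : ℝ, h y ∂μ)) x| ≤
      ⨆ y : ℝ, |deriv h y| := by
  set M : ℝ := ⨆ y : ℝ, |deriv h y| with hMdef
  have hM : ∀ y, |deriv h y| ≤ M := fun y => le_ciSup hbdd y
  set c : ℝ := ∫ y : ℝ, h y ∂μ with hc
  set G : ℝ → ℝ → ℝ := fun x t => (∫ y : ℝ, h (y + Real.exp (-t) * x) ∂(μt t)) - c with hG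
  have hin : ∀ t : ℝ, 0 < t → ∀ x : ℝ, DifferentiableAt ℝ (fun x => G x t) x ∧
      |deriv (fun x => G x t) x| ≤ M * Real.exp (-t) := by
    intro t ht x
    have := hP t ht
    exact inner_deriv (μt t) h hdiff (fun x y => (hLip x y).trans (min_le_left _ _)) M hM
      (Real.exp (-t)) (Real.exp_pos _) c x
  have hbint : Integrable (fun t : ℝ => M * Real.exp (-t)) (volume.restrict (Set.Ioi 0)) :=
    (integrableOn_exp_neg_Ioi 0).const_mul M
  have hmem : ∀ᵐ t : ℝ ∂(volume.restrict (Set.Ioi 0)), 0 < t :=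
    ae_restrict_mem measurableSet_Ioi
  have hder : ∀ x : ℝ, HasDerivAt (fun x => ∫ t in Set.Ioi (0 : ℝ), G x t)
      (∫ t in Set.Ioi (0 : ℝ), deriv (fun x => G x t) x) x := by
    intro x
    refine (hasDerivAt_integral_of_dominated_loc_of_deriv_le (𝕜 := ℝ)
      (F := G) (F' := fun x t => deriv (fun x => G x t) x)
      (x₀ := x) (s := Set.univ) (bound := fun t => M * Real.exp (-t)) Filter.univ_mem
      (Filter.Eventually.of_forall fun z => (hint2 z).aestronglyMeasurable) (hint2 x)
      ?_ ?_ hbint ?_).2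
    · refine aestronglyMeasurable_of_tendsto_ae Filter.atTop
        (f := fun (n : ℕ) t => (1 / ((n : ℝ) + 1))⁻¹ • (G (x + 1 / ((n : ℝ) + 1)) t - G x t))
        (fun n => ((hint2 (x + 1 / ((n : ℝ) + 1))).aestronglyMeasurable.sub
          (hint2 x).aestronglyMeasurable).const_smul ((1 / ((n : ℝ) + 1))⁻¹)) ?_
      filter_upwards [hmem] with t ht
      have h1 := (hin t ht x).1.hasDerivAt.tendsto_slope_zero
      refine h1.comp ?_
      refine tendsto_nhdsWithin_iff.2 ⟨tendsto_one_div_add_atTop_nhds_zero_nat, ?_⟩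
      refine Filter.Eventually.of_forall fun n => ?_
      have : (0 : ℝ) < 1 / ((n : ℝ) + 1) := by positivity
      exact this.ne'
    · filter_upwards [hmem] with t ht z _
      exact (hin t ht z).2
    · filter_upwards [hmem] with t ht z _
      exact (hin t ht z).1.hasDerivAt
  refine ⟨fun x => (hder x).neg.differentiableAt, fun x => ?_⟩
  have e : deriv (fun x => -∫ t in Set.Ioi (0 : ℝ), G x t) x =
      -∫ t in Set.Ioi (0 : ℝ), deriv (fun x => G x t) x := (hder x).neg.deriv
  rw [e, abs_neg]
  have hle := norm_integral_le_of_norm_le hbint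
    (f := fun t => deriv (fun x => G x t) x) (by
      filter_upwards [hmem] with t ht
      exact (hin t ht x).2)
  rw [integral_const_mul, integral_exp_neg_Ioi_zero, mul_one] at hle
  exact hle
end

section
/- (First- and second-derivative bounds for the Stein solution, α ∈ (1,2).) Let α ∈ (1,2), m₁, m₂ ∈ [0,∞) with m₁ + m₂ > 0, β ∈ ℝ. Let μ be a Borel probability measure on ℝ with characteristic function ψ_α, and for each t > 0 let μ_t be a Borel probability measure on ℝ with characteristic function ξ ↦ ψ_α(ξ)/ψ_α(e^{-t}ξ). Let h : ℝ → ℝ be bounded and twice differentiable with sup_x |h(x)| ≤ 1, sup_x |h'(x)| ≤ 1 and sup_x |h''(x)| ≤ 1. Assume h is μ-integrable and that for every x ∈ ℝ the function t ↦ ∫_ℝ h(y + e^{-t}x) dμ_t(y) - ∫_ℝ h dμ is Lebesgue integrable on (0,∞), and set f_h(x) = -∫₀^∞ (∫_ℝ h(y + e^{-t}x) dμ_t(y) - ∫_ℝ h dμ) dt. Then f_h is twice differentiable on ℝ, sup_x |f_h'(x)| ≤ sup_x |h'(x)|, and sup_x |f_h''(x)| ≤ (1/2) sup_x |h''(x)|.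 -/
open MeasureTheory

/-- Location parameter for `α ∈ [1,2)`:
`Γ_α = β + 2(m₁-m₂)∫₀^1 u^{2-α}(1+u²)^{-1} du - (m₁-m₂)∫₀^∞ min(1,u²) u^{-α}(1+u²)^{-1} du`. -/
noncomputable def Gamma12 (α m₁ m₂ β : ℝ) : ℝ :=
  β + 2 * (m₁ - m₂) * (∫ u in Set.Ioc (0 : ℝ) 1, u ^ (2 - α) / (1 + u ^ 2)) -
    (m₁ - m₂) * ∫ u in Set.Ioi (0 : ℝ), min 1 (u ^ 2) * u ^ (-α) / (1 + u ^ 2)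

/-- Characteristic function of the `α`-stable law, `α ∈ [1,2)`:
`ψ_α(t) = exp(itΓ_α + ∫_ℝ (e^{itu} - 1 - itu·1_{|u|≤1}) ν_α(du))`. -/
noncomputable def psi12 (α m₁ m₂ β : ℝ) (t : ℝ) : ℂ :=
  Complex.exp (Complex.I * t * (Gamma12 α m₁ m₂ β) +
    ∫ u : ℝ, (Complex.exp (Complex.I * t * u) - 1 -
      (if |u| ≤ 1 then Complex.I * t * u else 0)) ∂(nuStable α m₁ m₂))

theorem stein_aux {Ω : Type*} [MeasurableSpace Ω] (ρ : Measure Ω) (F F' : ℝ → Ω → ℝ)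
    (bound : Ω → ℝ) (hbound : Integrable bound ρ)
    (hF : ∀ x, Integrable (F x) ρ)
    (hd : ∀ᵐ a ∂ρ, ∀ x, HasDerivAt (fun x => F x a) (F' x a) x)
    (hb : ∀ᵐ a ∂ρ, ∀ x, |F' x a| ≤ bound a) (x : ℝ) :
    Integrable (F' x) ρ ∧ HasDerivAt (fun x => ∫ a, F x a ∂ρ) (∫ a, F' x a ∂ρ) x := by
  have hm : AEStronglyMeasurable (F' x) ρ := by
    refine aestronglyMeasurable_of_tendsto_ae Filter.atTop
      (f := fun (n : ℕ) a => ((n : ℝ) + 1) * (F (x + 1 / ((n : ℝ) + 1)) a - F x a)) ?_ ?_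
    · intro n
      exact (((hF _).sub (hF _)).const_mul _).aestronglyMeasurable
    · filter_upwards [hd] with a ha
      have h1 := (ha x).tendsto_slope_zero
      have h2 : Filter.Tendsto (fun n : ℕ => 1 / ((n : ℝ) + 1)) Filter.atTop
          (nhdsWithin (0 : ℝ) {0}ᶜ) := by
        refine tendsto_nhdsWithin_iff.2 ⟨tendsto_one_div_add_atTop_nhds_zero_nat, ?_⟩
        refine Filter.Eventually.of_forall fun n => ?_
        have : (0 : ℝ) < (n : ℝ) + 1 := by positivity
        simp [this.ne']
      simpa [Function.comp_def] using h1.comp h2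
  exact ⟨hbound.mono' hm (by filter_upwards [hb] with a ha using by simpa using ha x),
    (hasDerivAt_integral_of_dominated_loc_of_deriv_le (s := Set.univ) Filter.univ_mem
      (Filter.Eventually.of_forall fun x => (hF x).aestronglyMeasurable) (hF x) hm
      (by filter_upwards [hb] with a ha using fun x _ => by simpa using ha x) hbound
      (by filter_upwards [hd] with a ha using fun x _ => ha x)).2⟩

theorem stein_inner (ρ : Measure ℝ) [IsProbabilityMeasure ρ] (g : ℝ → ℝ)
    (hg : Differentiable ℝ g) (hb : ∀ x, |g x| ≤ 1) (hb' : ∀ x, |deriv g x| ≤ 1) (c x : ℝ) :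
    HasDerivAt (fun x => ∫ y, g (y + c * x) ∂ρ) (c * ∫ y, deriv g (y + c * x) ∂ρ) x := by
  have := (stein_aux ρ (fun x y => g (y + c * x)) (fun x y => c * deriv g (y + c * x))
    (fun _ => |c|) (integrable_const _) ?_ ?_ ?_ x).2
  · rwa [integral_const_mul] at this
  · intro x
    refine (integrable_const (1 : ℝ)).mono' ?_ (Filter.Eventually.of_forall fun y => hb _)
    exact (hg.continuous.comp (by fun_prop : Continuous fun y : ℝ => y + c * x)).aestronglyMeasurable
  · refine Filter.Eventually.of_forall fun y x => ?_
    have h1 : HasDerivAt (fun x : ℝ => y + c * x) c x := by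
      simpa using ((hasDerivAt_id x).const_mul c).const_add y
    simpa [mul_comm, Function.comp_def] using (hg (y + c * x)).hasDerivAt.comp x h1
  · refine Filter.Eventually.of_forall fun y x => ?_
    rw [abs_mul]
    exact mul_le_of_le_one_right (abs_nonneg _) (hb' _)

theorem stein_inner_bound (ρ : Measure ℝ) [IsProbabilityMeasure ρ] (g : ℝ → ℝ)
    (S : ℝ) (hb : ∀ x, |g x| ≤ S) (c : ℝ) : |∫ y, g (y + c) ∂ρ| ≤ S := by
  have := norm_integral_le_of_norm_le_const (μ := ρ) (f := fun y => g (y + c)) (C := S)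
    (Filter.Eventually.of_forall fun y => hb _)
  simpa using this

theorem stein_exp_integrable (c : ℝ) (hc : 0 < c) :
    IntegrableOn (fun t : ℝ => Real.exp (-c * t)) (Set.Ioi 0) :=
  integrableOn_exp_mul_Ioi (by linarith) 0

theorem stein_outer_bound (c S : ℝ) (hc : 0 < c) (f : ℝ → ℝ)
    (hf : ∀ t, 0 < t → |f t| ≤ Real.exp (-c * t) * S) :
    |∫ t in Set.Ioi (0 : ℝ), f t| ≤ 1 / c * S := by
  have := norm_integral_le_of_norm_le (μ := volume.restrict (Set.Ioi (0 : ℝ))) (f := f)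
    ((stein_exp_integrable c hc).mul_const S)
    ((ae_restrict_iff' measurableSet_Ioi).2 (Filter.Eventually.of_forall fun t ht => hf t ht))
  rw [integral_mul_const, integral_exp_mul_Ioi (by linarith)] at this
  simpa [neg_div_neg_eq] using this

theorem stmt_15 (α m₁ m₂ β : ℝ) (hα : 1 < α) (hα2 : α < 2)
    (hm₁ : 0 ≤ m₁) (hm₂ : 0 ≤ m₂) (hm : 0 < m₁ + m₂)
    (μ : Measure ℝ) [IsProbabilityMeasure μ]
    (hμ : ∀ t : ℝ, ∫ x : ℝ, Complex.exp (Complex.I * t * x) ∂μ = psi12 α m₁ m₂ β t)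
    (μt : ℝ → Measure ℝ) (hP : ∀ t : ℝ, 0 < t → IsProbabilityMeasure (μt t))
    (hμt : ∀ t : ℝ, 0 < t → ∀ ξ : ℝ,
      ∫ x : ℝ, Complex.exp (Complex.I * ξ * x) ∂(μt t) =
        psi12 α m₁ m₂ β ξ / psi12 α m₁ m₂ β (Real.exp (-t) * ξ))
    (h : ℝ → ℝ) (hdiff : Differentiable ℝ h) (hdiff2 : Differentiable ℝ (deriv h))
    (hb0 : ∀ x : ℝ, |h x| ≤ 1) (hb1 : ∀ x : ℝ, |deriv h x| ≤ 1)
    (hb2 : ∀ x : ℝ, |deriv (deriv h) x| ≤ 1)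
    (hint : Integrable h μ)
    (hint2 : ∀ x : ℝ, IntegrableOn
      (fun t : ℝ => (∫ y : ℝ, h (y + Real.exp (-t) * x) ∂(μt t)) - ∫ y : ℝ, h y ∂μ)
      (Set.Ioi 0)) :
    Differentiable ℝ (fun x : ℝ => -∫ t in Set.Ioi (0 : ℝ),
        ((∫ y : ℝ, h (y + Real.exp (-t) * x) ∂(μt t)) - ∫ y : ℝ, h y ∂μ)) ∧
    Differentiable ℝ (deriv (fun x : ℝ => -∫ t in Set.Ioi (0 : ℝ),
        ((∫ y : ℝ, h (y + Real.exp (-t) * x) ∂(μt t)) - ∫ y : ℝ, h y ∂μ))) ∧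
    (∀ x : ℝ, |deriv (fun x : ℝ => -∫ t in Set.Ioi (0 : ℝ),
        ((∫ y : ℝ, h (y + Real.exp (-t) * x) ∂(μt t)) - ∫ y : ℝ, h y ∂μ)) x| ≤
      ⨆ y : ℝ, |deriv h y|) ∧
    ∀ x : ℝ, |deriv (deriv (fun x : ℝ => -∫ t in Set.Ioi (0 : ℝ),
        ((∫ y : ℝ, h (y + Real.exp (-t) * x) ∂(μt t)) - ∫ y : ℝ, h y ∂μ))) x| ≤
      (1 / 2) * ⨆ y : ℝ, |deriv (deriv h) y| := by
  have hS1 : ∀ x, |deriv h x| ≤ ⨆ y : ℝ, |deriv h y| :=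
    le_ciSup (f := fun y => |deriv h y|) ⟨1, by rintro _ ⟨y, rfl⟩; exact hb1 y⟩
  have hS2 : ∀ x, |deriv (deriv h) x| ≤ ⨆ y : ℝ, |deriv (deriv h) y| :=
    le_ciSup (f := fun y => |deriv (deriv h) y|) ⟨1, by rintro _ ⟨y, rfl⟩; exact hb2 y⟩
  have hpos : ∀ᵐ t ∂(volume.restrict (Set.Ioi (0 : ℝ))), 0 < t :=
    ae_restrict_mem measurableSet_Ioi
  have B1 : ∀ S : ℝ, (∀ x, |deriv h x| ≤ S) → ∀ t : ℝ, 0 < t → ∀ x : ℝ,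
      |Real.exp (-t) * ∫ y, deriv h (y + Real.exp (-t) * x) ∂(μt t)| ≤ Real.exp (-1 * t) * S := by
    intro S hS t ht x
    haveI := hP t ht
    rw [abs_mul, abs_of_pos (Real.exp_pos _), neg_one_mul]
    exact mul_le_mul_of_nonneg_left (stein_inner_bound _ _ S hS _) (Real.exp_pos _).le
  have B2 : ∀ S : ℝ, (∀ x, |deriv (deriv h) x| ≤ S) → ∀ t : ℝ, 0 < t → ∀ x : ℝ,
      |Real.exp (-t) * (Real.exp (-t) * ∫ y, deriv (deriv h) (y + Real.exp (-t) * x) ∂(μt t))| ≤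
        Real.exp (-2 * t) * S := by
    intro S hS t ht x
    haveI := hP t ht
    rw [← mul_assoc, ← Real.exp_add, abs_mul, abs_of_pos (Real.exp_pos _),
      show -t + -t = -2 * t by ring]
    exact mul_le_mul_of_nonneg_left (stein_inner_bound _ _ S hS _) (Real.exp_pos _).le
  have A1 := stein_aux (volume.restrict (Set.Ioi (0 : ℝ)))
    (fun x t => (∫ y : ℝ, h (y + Real.exp (-t) * x) ∂(μt t)) - ∫ y : ℝ, h y ∂μ)
    (fun x t => Real.exp (-t) * ∫ y, deriv h (y + Real.exp (-t) * x) ∂(μt t))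
    (fun t => Real.exp (-1 * t) * 1) ((stein_exp_integrable 1 one_pos).mul_const 1) hint2
    (by
      filter_upwards [hpos] with t ht x
      haveI := hP t ht
      exact (stein_inner (μt t) h hdiff hb0 hb1 _ x).sub_const _)
    (by filter_upwards [hpos] with t ht x using B1 1 hb1 t ht x)
  have A2 := stein_aux (volume.restrict (Set.Ioi (0 : ℝ)))
    (fun x t => Real.exp (-t) * ∫ y, deriv h (y + Real.exp (-t) * x) ∂(μt t))
    (fun x t => Real.exp (-t) * (Real.exp (-t) *
      ∫ y, deriv (deriv h) (y + Real.exp (-t) * x) ∂(μt t)))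
    (fun t => Real.exp (-2 * t) * 1) ((stein_exp_integrable 2 two_pos).mul_const 1)
    (fun x => (A1 x).1)
    (by
      filter_upwards [hpos] with t ht x
      haveI := hP t ht
      exact (stein_inner (μt t) (deriv h) hdiff2 hb1 hb2 _ x).const_mul _)
    (by filter_upwards [hpos] with t ht x using B2 1 hb2 t ht x)
  have D1 := fun x => (A1 x).2.fun_neg
  have D2 := fun x => (A2 x).2.fun_neg
  have E1 := funext fun x => (D1 x).deriv
  refine ⟨fun x => (D1 x).differentiableAt, ?_, fun x => ?_, fun x => ?_⟩
  · rw [E1]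
    exact fun x => (D2 x).differentiableAt
  · rw [(D1 x).deriv, abs_neg]
    have := stein_outer_bound 1 _ one_pos _ (fun t ht => B1 _ hS1 t ht x)
    simpa using this
  · rw [E1, (D2 x).deriv, abs_neg]
    exact stein_outer_bound 2 _ two_pos _ (fun t ht => B2 _ hS2 t ht x)
end

section
/- (Kernel decomposition of the compensated stable integral.) Let α ∈ (1,2), m₁, m₂ ∈ [0,∞) with m₁ + m₂ > 0, and let f : ℝ → ℝ be twice continuously differentiable with sup_x |f'(x)| < ∞ and sup_x |f''(x)| < ∞. Then for every N > 0 and every x ∈ ℝ, ∫_ℝ (f'(x+u) - f'(x)) u ν_α(du) = ∫_{-N}^{N} K_{ν_α}(t,N) f''(x+t) dt + ∫_{|u|>N} (f'(x+u) - f'(x)) u ν_α(du), where K_{ν_α}(t,N) = 1_{[0,N]}(t) ∫_{(t,N]} u ν_α(du) + 1_{[-N,0)}(t) ∫_{[-N,t)} (-u) ν_α(du), and all displayed integrals converge absolutely. -/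
open MeasureTheory

/-- The kernel `K_{ν_α}(t,N) = 1_{[0,N]}(t) ∫_{(t,N]} u ν_α(du) + 1_{[-N,0)}(t) ∫_{[-N,t)} (-u) ν_α(du)`. -/
noncomputable def Knu (α m₁ m₂ N t : ℝ) : ℝ :=
  (if t ∈ Set.Icc (0 : ℝ) N then ∫ u in Set.Ioc t N, u ∂(nuStable α m₁ m₂) else 0) +
  (if t ∈ Set.Ico (-N) (0 : ℝ) then ∫ u in Set.Ico (-N) t, -u ∂(nuStable α m₁ m₂) else 0)

lemma aux_B_int (α N : ℝ) (hα : 1 < α) (hα2 : α < 2) (hN : 0 < N) :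
    Integrable (fun u : ℝ => (Set.Ioc 0 N).indicator (fun u => u ^ (1 - α)) u
      + (Set.Ioi N).indicator (fun u => u ^ (-α)) u) volume := by
  apply Integrable.add
  · rw [integrable_indicator_iff measurableSet_Ioc]
    rw [← intervalIntegrable_iff_integrableOn_Ioc_of_le hN.le]
    exact intervalIntegral.intervalIntegrable_rpow' (by linarith)
  · rw [integrable_indicator_iff measurableSet_Ioi]
    exact integrableOn_Ioi_rpow_of_lt (by linarith) hN

noncomputable def auxb (N u : ℝ) : ℝ := if |u| ≤ N then u ^ 2 else |u|

lemma auxb_meas (N : ℝ) : Measurable (auxb N) := by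
  unfold auxb
  exact Measurable.ite (measurableSet_le (by fun_prop) (by fun_prop)) (by fun_prop) (by fun_prop)

lemma auxb_int (α m₁ m₂ N : ℝ) (hα : 1 < α) (hα2 : α < 2) (hN : 0 < N)
    (hm₁ : 0 ≤ m₁) (hm₂ : 0 ≤ m₂) : Integrable (auxb N) (nuStable α m₁ m₂) := by
  unfold nuStable
  have hmeas : Measurable fun u : ℝ => ENNReal.ofReal
      (if 0 < u then m₁ * u ^ (-α - 1) else if u < 0 then m₂ * |u| ^ (-α - 1) else 0) := by
    apply Measurable.ennreal_ofReal
    refine Measurable.ite (measurableSet_lt (by fun_prop) (by fun_prop)) (by fun_prop) ?_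
    exact Measurable.ite (measurableSet_lt (by fun_prop) (by fun_prop)) (by fun_prop) (by fun_prop)
  rw [integrable_withDensity_iff hmeas (Filter.Eventually.of_forall fun _ => ENNReal.ofReal_lt_top)]
  have hB := aux_B_int α N hα hα2 hN
  have h2 := (hB.const_mul m₁).add (hB.comp_neg.const_mul m₂)
  refine h2.congr (Filter.Eventually.of_forall fun u => ?_)
  have e1 : ∀ v : ℝ, 0 < v → v ^ (1 - α) = v ^ (-α - 1) * v ^ 2 := by
    intro v hv
    rw [← Real.rpow_natCast v 2, ← Real.rpow_add hv]
    congr 1; push_cast; ring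
  have e2 : ∀ v : ℝ, 0 < v → v ^ (-α) = v ^ (-α - 1) * v := by
    intro v hv
    nth_rewrite 3 [← Real.rpow_one v]
    rw [← Real.rpow_add hv]
    congr 1; ring
  simp only [Pi.add_apply, auxb, Set.indicator_apply, Set.mem_Ioc, Set.mem_Ioi]
  rcases lt_trichotomy u 0 with hu | hu | hu
  · have hp : 0 ≤ m₂ * (-u) ^ (-α - 1) := mul_nonneg hm₂ (Real.rpow_nonneg (by linarith) _)
    rw [abs_of_neg hu, if_neg (not_lt.2 hu.le), if_pos hu, ENNReal.toReal_ofReal hp, e1 (-u) (by linarith),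
      e2 (-u) (by linarith)]
    rcases le_or_gt (-u) N with h | h
    · rw [if_neg (by rintro ⟨a, -⟩; linarith), if_neg (by linarith), if_pos ⟨by linarith, h⟩,
        if_neg (by linarith), if_pos h]
      ring
    · rw [if_neg (by rintro ⟨a, -⟩; linarith), if_neg (by linarith),
        if_neg (by rintro ⟨-, a⟩; linarith), if_pos h, if_neg (by linarith)]
      ring
  · subst hu
    simp [hN.le, not_lt.2 hN.le]
  · have hp : 0 ≤ m₁ * u ^ (-α - 1) := mul_nonneg hm₁ (Real.rpow_nonneg (by linarith) _)
    rw [abs_of_pos hu, if_pos hu, ENNReal.toReal_ofReal hp, e1 u hu, e2 u hu]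
    rcases le_or_gt u N with h | h
    · rw [if_pos ⟨hu, h⟩, if_neg (by linarith), if_neg (by rintro ⟨a, -⟩; linarith),
        if_neg (by linarith), if_pos h]
      ring
    · rw [if_neg (by rintro ⟨-, a⟩; linarith), if_pos h, if_neg (by rintro ⟨a, -⟩; linarith),
        if_neg (by linarith), if_neg (by linarith)]
      ring

def auxD (N : ℝ) : Set (ℝ × ℝ) :=
  {p | (0 ≤ p.2 ∧ p.2 < p.1 ∧ p.1 ≤ N) ∨ (-N ≤ p.1 ∧ p.1 < p.2 ∧ p.2 < 0)}

lemma auxD_meas (N : ℝ) : MeasurableSet (auxD N) := by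
  have h1 : Measurable (fun p : ℝ × ℝ => p.1) := measurable_fst
  have h2 : Measurable (fun p : ℝ × ℝ => p.2) := measurable_snd
  have c : ∀ a : ℝ, Measurable (fun _ : ℝ × ℝ => a) := fun a => measurable_const
  exact ((measurableSet_le (c 0) h2).inter ((measurableSet_lt h2 h1).inter
    (measurableSet_le h1 (c N)))).union
    ((measurableSet_le (c (-N)) h1).inter ((measurableSet_lt h1 h2).inter
    (measurableSet_lt h2 (c 0))))

/-- The Fubini integrand. -/
noncomputable def auxF (N : ℝ) (h : ℝ → ℝ) (p : ℝ × ℝ) : ℝ :=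
  (auxD N).indicator (fun p => |p.1| * h p.2) p

lemma auxF_pos (N : ℝ) (h : ℝ → ℝ) (u : ℝ) (hu : 0 < u) (huN : u ≤ N) :
    (fun t => auxF N h (u, t)) = (Set.Ico 0 u).indicator (fun t => u * h t) := by
  funext t
  simp only [auxF, Set.indicator_apply, auxD, Set.mem_ofPred_eq, Set.mem_Ico, abs_of_pos hu]
  congr 1
  apply propext
  constructor
  · rintro (⟨a, b, c⟩ | ⟨a, b, c⟩)
    · exact ⟨a, b⟩
    · linarith
  · rintro ⟨a, b⟩
    exact Or.inl ⟨a, b, huN⟩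

lemma auxF_neg (N : ℝ) (h : ℝ → ℝ) (u : ℝ) (hu : u < 0) (huN : -N ≤ u) :
    (fun t => auxF N h (u, t)) = (Set.Ioo u 0).indicator (fun t => -u * h t) := by
  funext t
  simp only [auxF, Set.indicator_apply, auxD, Set.mem_ofPred_eq, Set.mem_Ioo, abs_of_neg hu]
  congr 1
  apply propext
  constructor
  · rintro (⟨a, b, c⟩ | ⟨a, b, c⟩)
    · linarith
    · exact ⟨b, c⟩
  · rintro ⟨a, b⟩
    exact Or.inr ⟨huN, a, b⟩

lemma auxF_zero (N : ℝ) (h : ℝ → ℝ) (u : ℝ) (hu : u = 0 ∨ N < |u|) :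
    (fun t => auxF N h (u, t)) = fun _ => 0 := by
  funext t
  simp only [auxF, Set.indicator_apply, auxD, Set.mem_ofPred_eq]
  rcases hu with hu | hu
  · simp [hu]
  · rw [if_neg]
    rintro (⟨a, b, c⟩ | ⟨a, b, c⟩)
    · rw [abs_of_pos (by linarith)] at hu; linarith
    · rw [abs_of_neg (by linarith)] at hu; linarith

lemma auxF_cases (N u : ℝ) : (0 < u ∧ u ≤ N) ∨ (u < 0 ∧ -N ≤ u) ∨ (u = 0 ∨ N < |u|) := by
  rcases lt_trichotomy u 0 with hu | hu | hu
  · rw [abs_of_neg hu]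
    by_cases h : -N ≤ u
    · exact Or.inr (Or.inl ⟨hu, h⟩)
    · exact Or.inr (Or.inr (Or.inr (by linarith)))
  · exact Or.inr (Or.inr (Or.inl hu))
  · rw [abs_of_pos hu]
    by_cases h : u ≤ N
    · exact Or.inl ⟨hu, h⟩
    · exact Or.inr (Or.inr (Or.inr (by linarith)))

lemma auxF_sec (N : ℝ) (h : ℝ → ℝ) (hc : Continuous h) (u : ℝ) :
    Integrable (fun t => auxF N h (u, t)) volume := by
  rcases auxF_cases N u with ⟨h1, h2⟩ | ⟨h1, h2⟩ | h1
  · rw [auxF_pos N h u h1 h2, integrable_indicator_iff measurableSet_Ico]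
    exact ((by fun_prop : Continuous fun t => u * h t).integrableOn_Icc).mono_set
      Set.Ico_subset_Icc_self
  · rw [auxF_neg N h u h1 h2, integrable_indicator_iff measurableSet_Ioo]
    exact ((by fun_prop : Continuous fun t => -u * h t).integrableOn_Icc).mono_set
      Set.Ioo_subset_Icc_self
  · rw [auxF_zero N h u h1]; simp

lemma auxF_int_t (N : ℝ) (g h : ℝ → ℝ) (hc : Continuous h) (hg : ∀ t, HasDerivAt g (h t) t)
    (hN : 0 < N) (u : ℝ) :
    ∫ t, auxF N h (u, t) = {u : ℝ | N < |u|}ᶜ.indicator (fun u => (g u - g 0) * u) u := by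
  have ftc : ∀ a b : ℝ, ∫ t in a..b, h t = g b - g a := fun a b =>
    intervalIntegral.integral_eq_sub_of_hasDerivAt (fun t _ => hg t) (hc.intervalIntegrable _ _)
  simp only [Set.indicator_apply, Set.mem_compl_iff, Set.mem_ofPred_eq]
  rcases auxF_cases N u with ⟨h1, h2⟩ | ⟨h1, h2⟩ | h1 | h1
  · rw [auxF_pos N h u h1 h2, integral_indicator measurableSet_Ico, integral_const_mul,
      integral_Ico_eq_integral_Ioc, ← intervalIntegral.integral_of_le h1.le, ftc,
      abs_of_pos h1, if_pos (by linarith)]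
    ring
  · rw [auxF_neg N h u h1 h2, integral_indicator measurableSet_Ioo, integral_const_mul,
      ← integral_Ioc_eq_integral_Ioo, ← intervalIntegral.integral_of_le h1.le, ftc,
      abs_of_neg h1, if_pos (by linarith)]
    ring
  · rw [auxF_zero N h u (Or.inl h1)]; simp [h1]
  · rw [auxF_zero N h u (Or.inr h1), if_neg (by simpa using h1)]; simp

lemma auxF_norm (N : ℝ) (h : ℝ → ℝ) (C : ℝ) (hC : ∀ t, |h t| ≤ C) (hN : 0 < N) (u : ℝ) :
    ∫ t, ‖auxF N h (u, t)‖ ≤ C * auxb N u := by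
  have hC0 : 0 ≤ C := (abs_nonneg _).trans (hC 0)
  have e : ∀ (S : Set ℝ) (c : ℝ), MeasurableSet S → volume S ≠ ⊤ → 
      ∫ t, ‖S.indicator (fun t => c * h t) t‖ ≤ (|c| * C) * volume.real S := by
    intro S c hS hS'
    have : ∫ t, S.indicator (fun _ => |c| * C) t = (|c| * C) * volume.real S := by
      rw [integral_indicator hS]; simp [mul_comm]
    rw [← this]
    apply integral_mono_of_nonneg (Filter.Eventually.of_forall fun _ => norm_nonneg _)
    · rw [integrable_indicator_iff hS]
      exact integrableOn_const hS'
    · refine Filter.Eventually.of_forall fun t => ?_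
      by_cases ht : t ∈ S
      · simp only [Set.indicator_of_mem ht]
        rw [norm_mul, Real.norm_eq_abs, Real.norm_eq_abs]
        gcongr
        exact hC t
      · simp [Set.indicator_of_notMem ht]
  rcases auxF_cases N u with ⟨h1, h2⟩ | ⟨h1, h2⟩ | h1
  · have := e (Set.Ico 0 u) u measurableSet_Ico (by simp)
    have e2 := auxF_pos N h u h1 h2
    simp only [funext_iff] at e2
    simp only [e2]
    refine this.trans (le_of_eq ?_)
    simp only [auxb, abs_of_pos h1, if_pos h2, Real.volume_real_Ico_of_le h1.le]
    ring
  · have := e (Set.Ioo u 0) (-u) measurableSet_Ioo (by simp)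
    have e2 := auxF_neg N h u h1 h2
    simp only [funext_iff] at e2
    simp only [e2]
    refine this.trans (le_of_eq ?_)
    simp only [auxb, abs_neg, abs_of_neg h1, if_pos (show -u ≤ N by linarith), Real.volume_real_Ioo_of_le h1.le]
    ring
  · have e2 := auxF_zero N h u h1
    simp only [funext_iff] at e2
    simp only [e2]
    have : 0 ≤ auxb N u := by unfold auxb; split_ifs <;> positivity
    simp; positivity

lemma auxF_int_u (α m₁ m₂ N : ℝ) (h : ℝ → ℝ) (hN : 0 < N) (t : ℝ) :
    ∫ u, auxF N h (u, t) ∂(nuStable α m₁ m₂)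
      = (Set.Icc (-N) N).indicator (fun t => Knu α m₁ m₂ N t * h t) t := by
  by_cases h1 : 0 ≤ t ∧ t ≤ N
  · have : (fun u => auxF N h (u, t)) = (Set.Ioc t N).indicator (fun u => u * h t) := by
      funext u
      simp only [auxF, Set.indicator_apply, auxD, Set.mem_ofPred_eq, Set.mem_Ioc]
      by_cases hu : t < u ∧ u ≤ N
      · rw [if_pos hu, if_pos (Or.inl ⟨h1.1, hu⟩), abs_of_pos (by linarith)]
      · rw [if_neg hu, if_neg]
        rintro (⟨a, b⟩ | ⟨a, b, c⟩)
        · exact hu b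
        · linarith
    rw [this, integral_indicator measurableSet_Ioc, integral_mul_const,
      Set.indicator_of_mem (show t ∈ Set.Icc (-N) N from ⟨by linarith, h1.2⟩), Knu,
      if_pos (show t ∈ Set.Icc 0 N from h1), if_neg (fun a => by linarith [a.2]), add_zero]
  by_cases h2 : -N ≤ t ∧ t < 0
  · have : (fun u => auxF N h (u, t)) = (Set.Ico (-N) t).indicator (fun u => -u * h t) := by
      funext u
      simp only [auxF, Set.indicator_apply, auxD, Set.mem_ofPred_eq, Set.mem_Ico]
      by_cases hu : -N ≤ u ∧ u < t
      · rw [if_pos hu, if_pos (Or.inr ⟨hu.1, hu.2, h2.2⟩), abs_of_neg (by linarith)]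
      · rw [if_neg hu, if_neg]
        rintro (⟨a, b⟩ | ⟨a, b, c⟩)
        · linarith
        · exact hu ⟨a, b⟩
    rw [this, integral_indicator measurableSet_Ico, integral_mul_const,
      Set.indicator_of_mem (show t ∈ Set.Icc (-N) N from ⟨h2.1, by linarith⟩), Knu,
      if_neg (show t ∉ Set.Icc 0 N from fun a => h1 a), if_pos (show t ∈ Set.Ico (-N) 0 from h2), zero_add]
  · have : (fun u => auxF N h (u, t)) = fun _ => 0 := by
      funext u
      simp only [auxF, Set.indicator_apply, auxD, Set.mem_ofPred_eq]
      rw [if_neg]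
      rintro (⟨a, b, c⟩ | ⟨a, b, c⟩)
      · exact h1 ⟨a, by linarith⟩
      · exact h2 ⟨by linarith, c⟩
    rw [this, Set.indicator_of_notMem]
    · simp
    · rintro ⟨a, b⟩
      by_cases h3 : 0 ≤ t
      · exact h1 ⟨h3, b⟩
      · exact h2 ⟨a, by linarith⟩

instance aux_sfinite (α m₁ m₂ : ℝ) : SFinite (nuStable α m₁ m₂) := by
  unfold nuStable; infer_instance

lemma auxF_integrable (α m₁ m₂ N : ℝ) (hα : 1 < α) (hα2 : α < 2) (hN : 0 < N)
    (hm₁ : 0 ≤ m₁) (hm₂ : 0 ≤ m₂) (h : ℝ → ℝ) (hc : Continuous h)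
    (C : ℝ) (hC : ∀ t, |h t| ≤ C) :
    Integrable (auxF N h) ((nuStable α m₁ m₂).prod volume) := by
  have hmeas : Measurable (auxF N h) := by
    unfold auxF
    have := hc.measurable
    exact Measurable.indicator (by fun_prop) (auxD_meas N)
  rw [integrable_prod_iff hmeas.aestronglyMeasurable]
  refine ⟨Filter.Eventually.of_forall fun u => auxF_sec N h hc u, ?_⟩
  refine ((auxb_int α m₁ m₂ N hα hα2 hN hm₁ hm₂).const_mul C).mono' ?_ ?_
  · exact hmeas.norm.stronglyMeasurable.integral_prod_right'.aestronglyMeasurable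
  · refine Filter.Eventually.of_forall fun u => ?_
    rw [Real.norm_of_nonneg (integral_nonneg fun _ => norm_nonneg _)]
    exact auxF_norm N h C hC hN u

theorem stmt_17 (α m₁ m₂ : ℝ) (hα : 1 < α) (hα2 : α < 2)
    (hm₁ : 0 ≤ m₁) (hm₂ : 0 ≤ m₂) (hm : 0 < m₁ + m₂)
    (f : ℝ → ℝ) (hf : ContDiff ℝ 2 f)
    (hf1 : ∃ C : ℝ, ∀ x : ℝ, |deriv f x| ≤ C)
    (hf2 : ∃ C : ℝ, ∀ x : ℝ, |deriv (deriv f) x| ≤ C)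
    (N : ℝ) (hN : 0 < N) (x : ℝ) :
    Integrable (fun u : ℝ => (deriv f (x + u) - deriv f x) * u) (nuStable α m₁ m₂) ∧
    IntegrableOn (fun t : ℝ => Knu α m₁ m₂ N t * deriv (deriv f) (x + t))
      (Set.Icc (-N) N) ∧
    Integrable (fun u : ℝ => (deriv f (x + u) - deriv f x) * u)
      ((nuStable α m₁ m₂).restrict {u : ℝ | N < |u|}) ∧
    ∫ u : ℝ, (deriv f (x + u) - deriv f x) * u ∂(nuStable α m₁ m₂) =
      (∫ t in Set.Icc (-N) N, Knu α m₁ m₂ N t * deriv (deriv f) (x + t)) +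
      ∫ u in {u : ℝ | N < |u|}, (deriv f (x + u) - deriv f x) * u ∂(nuStable α m₁ m₂) := by
  obtain ⟨C1, hC1⟩ := hf1
  obtain ⟨C2, hC2⟩ := hf2
  have hd1 : ContDiff ℝ 1 (deriv f) := by
    have : ContDiff ℝ (1 + 1) f := by simpa [one_add_one_eq_two] using hf
    exact (contDiff_succ_iff_deriv.1 this).2.2
  have hdiff : Differentiable ℝ (deriv f) := hd1.differentiable (by norm_num)
  have hcont : Continuous (deriv (deriv f)) := hd1.continuous_deriv le_rfl
  have hcont1 : Continuous (deriv f) := hd1.continuous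
  have hder : ∀ t, HasDerivAt (fun t => deriv f (x + t)) (deriv (deriv f) (x + t)) t := by
    intro t
    exact (hdiff (x + t)).hasDerivAt.comp_const_add x t
  have hC10 : 0 ≤ C1 := (abs_nonneg _).trans (hC1 0)
  have hC20 : 0 ≤ C2 := (abs_nonneg _).trans (hC2 0)
  have hlip : ∀ u, |deriv f (x + u) - deriv f x| ≤ C2 * |u| := by
    intro u
    have := Convex.norm_image_sub_le_of_norm_deriv_le (f := deriv f) (s := Set.univ) (C := C2)
      (x := x) (y := x + u) (fun y _ => hdiff y) (fun y _ => hC2 y) convex_univ trivial trivial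
    simpa using this
  have hbd : ∀ u, |deriv f (x + u) - deriv f x| ≤ 2 * C1 := by
    intro u
    have := abs_sub (deriv f (x + u)) (deriv f x)
    linarith [hC1 (x + u), hC1 x]
  have I1 : Integrable (fun u : ℝ => (deriv f (x + u) - deriv f x) * u) (nuStable α m₁ m₂) := by
    refine ((auxb_int α m₁ m₂ N hα hα2 hN hm₁ hm₂).const_mul (2 * C1 + C2)).mono' ?_ ?_
    · exact (by fun_prop : Continuous fun u : ℝ => (deriv f (x + u) - deriv f x) * u).aestronglyMeasurable
    · refine Filter.Eventually.of_forall fun u => ?_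
      rw [Real.norm_eq_abs, abs_mul]
      unfold auxb
      split_ifs with hu
      · rw [← sq_abs u]
        have := mul_le_mul_of_nonneg_right (hlip u) (abs_nonneg u)
        have h3 : 0 ≤ 2 * C1 * |u| ^ 2 := by positivity
        nlinarith
      · have := mul_le_mul_of_nonneg_right (hbd u) (abs_nonneg u)
        have h3 : 0 ≤ C2 * |u| := by positivity
        nlinarith
  have hF := auxF_integrable α m₁ m₂ N hα hα2 hN hm₁ hm₂ (fun t => deriv (deriv f) (x + t))
    (by fun_prop) C2 (fun t => hC2 _)
  have hS : MeasurableSet {u : ℝ | N < |u|} := measurableSet_lt (by fun_prop) (by fun_prop)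
  refine ⟨I1, ?_, I1.restrict, ?_⟩
  · rw [← integrable_indicator_iff measurableSet_Icc]
    refine hF.integral_prod_right.congr (Filter.Eventually.of_forall fun t => ?_)
    exact auxF_int_u α m₁ m₂ N _ hN t
  · rw [← integral_add_compl hS I1, add_comm]
    congr 1
    rw [← integral_indicator hS.compl, ← integral_indicator measurableSet_Icc]
    have E1 := integral_prod _ hF
    have E2 := integral_prod_symm _ hF
    rw [E1] at E2
    simp only [auxF_int_u α m₁ m₂ N _ hN, auxF_int_t N _ _ (by fun_prop : Continuous fun t =>
      deriv (deriv f) (x + t)) hder hN, add_zero] at E2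
    exact E2
end
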